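/- arXiv:2411.11634 — 4 statements merged into one kernel-verified Lean document; each statement's English description precedes it below -/
import Mathlib

section
/- Let A ∈ M_n(ℤ) be non-singular and let T ∈ M_n(ℚ). Then T·x ∈ G_A for every x ∈ G_A if and only if every entry of T lies in ℤ[1/det A] and, for every prime p ∈ P'(A), the matrix T (viewed as a matrix over ℚ_p) maps Ḡ_{A,p} into Ḡ_{A,p}. -/
open Matrix Polynomial

noncomputable section

/-- The matrix `A` viewed over `ℚ`. -/
def Aq {n : ℕ} (A : Matrix (Fin n) (Fin n) ℤ) : Matrix (Fin n) (Fin n) ℚ :=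
  A.map (Int.cast : ℤ → ℚ)

/-- The group `G_A = {A^k x : x ∈ ℤ^n, k ∈ ℤ} ⊆ ℚ^n`. -/
def GA {n : ℕ} (A : Matrix (Fin n) (Fin n) ℤ) : Set (Fin n → ℚ) :=
  {v | ∃ (k : ℤ) (x : Fin n → ℤ), v = (Aq A ^ k) *ᵥ fun i => ((x i : ℚ))}

/-- The ring `ℤ[1 / det A] ⊆ ℚ`. -/
def Rdet {n : ℕ} (A : Matrix (Fin n) (Fin n) ℤ) : Set ℚ :=
  {r | ∃ (a : ℤ) (l : ℕ), r = (a : ℚ) / ((A.det : ℚ)) ^ l}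

/-- `P'(A)`: primes dividing `det A` such that `h_A ≢ x^n (mod p)`. -/
def Pbad {n : ℕ} (A : Matrix (Fin n) (Fin n) ℤ) : Set ℕ :=
  {p | p.Prime ∧ (p : ℤ) ∣ A.det ∧ A.charpoly.map (Int.castRingHom (ZMod p)) ≠ X ^ n}

/-- `Ḡ_{A,p} = {A^k x : x ∈ ℤ_p^n, k ∈ ℤ} ⊆ ℚ_p^n`. -/
def GAp {n : ℕ} (A : Matrix (Fin n) (Fin n) ℤ) (p : ℕ) [Fact p.Prime] :
    Set (Fin n → ℚ_[p]) :=
  {v | ∃ (k : ℤ) (x : Fin n → ℤ_[p]),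
    v = ((A.map (Int.cast : ℤ → ℚ_[p])) ^ k) *ᵥ fun i => ((x i : ℚ_[p]))}

/-! ### Generic facts -/

/-- An integer matrix viewed over a field. -/
def icast (K : Type) [Field K] {n : ℕ} (A : Matrix (Fin n) (Fin n) ℤ) :
    Matrix (Fin n) (Fin n) K := A.map (Int.cast : ℤ → K)

lemma icast_eq (K : Type) [Field K] {n : ℕ} (A : Matrix (Fin n) (Fin n) ℤ) :
    icast K A = (Int.castRingHom K).mapMatrix A := rfl

lemma icast_pow (K : Type) [Field K] {n : ℕ} (A : Matrix (Fin n) (Fin n) ℤ) (m : ℕ) :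
    icast K (A ^ m) = icast K A ^ m := by
  simp only [icast_eq, map_pow]

lemma icast_mul (K : Type) [Field K] {n : ℕ} (A B : Matrix (Fin n) (Fin n) ℤ) :
    icast K (A * B) = icast K A * icast K B := by
  simp only [icast_eq, map_mul]

lemma icast_det (K : Type) [Field K] {n : ℕ} (A : Matrix (Fin n) (Fin n) ℤ) :
    (icast K A).det = (A.det : K) := by
  rw [icast_eq, ← RingHom.map_det]; rfl

lemma icast_smul (K : Type) [Field K] {n : ℕ} (c : ℤ) (A : Matrix (Fin n) (Fin n) ℤ) :
    icast K (c • A) = (c : K) • icast K A := by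
  ext a b
  exact Int.cast_mul c (A a b)

lemma icast_one (K : Type) [Field K] {n : ℕ} :
    icast K (1 : Matrix (Fin n) (Fin n) ℤ) = 1 := by
  simp only [icast_eq, map_one]

lemma icast_mulVec_mem {K : Type} [Field K] (S : Subring K) {n : ℕ}
    (C : Matrix (Fin n) (Fin n) ℤ) {v : Fin n → K} (hv : ∀ i, v i ∈ S) (i : Fin n) :
    (icast K C *ᵥ v) i ∈ S := by
  simp only [mulVec, dotProduct, icast, Matrix.map_apply]
  exact S.sum_mem fun j _ => S.mul_mem (intCast_mem S _) (hv j)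

/-- `v` is in the group attached to `A` and the subring `S`. -/
def inG {K : Type} [Field K] (S : Subring K) {n : ℕ}
    (A : Matrix (Fin n) (Fin n) ℤ) (v : Fin n → K) : Prop :=
  ∃ m : ℕ, ∀ i, (icast K A ^ m *ᵥ v) i ∈ S

lemma pow_mono_mem {K : Type} [Field K] (S : Subring K) {n : ℕ}
    (A : Matrix (Fin n) (Fin n) ℤ) {v : Fin n → K} {m k : ℕ} (hmk : m ≤ k)
    (h : ∀ i, (icast K A ^ m *ᵥ v) i ∈ S) (i : Fin n) : (icast K A ^ k *ᵥ v) i ∈ S := by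
  obtain ⟨l, rfl⟩ := Nat.exists_eq_add_of_le hmk
  rw [add_comm, pow_add, ← mulVec_mulVec, ← icast_pow K A l]
  exact icast_mulVec_mem S _ h i

lemma inG_add {K : Type} [Field K] (S : Subring K) {n : ℕ}
    (A : Matrix (Fin n) (Fin n) ℤ) {v w : Fin n → K} (hv : inG S A v) (hw : inG S A w) :
    inG S A (v + w) := by
  obtain ⟨a, ha⟩ := hv
  obtain ⟨b, hb⟩ := hw
  refine ⟨max a b, fun i => ?_⟩
  rw [mulVec_add]
  exact S.add_mem (pow_mono_mem S A (le_max_left _ _) ha i)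
    (pow_mono_mem S A (le_max_right _ _) hb i)

lemma inG_smul {K : Type} [Field K] (S : Subring K) {n : ℕ}
    (A : Matrix (Fin n) (Fin n) ℤ) {v : Fin n → K} {c : K} (hc : c ∈ S) (hv : inG S A v) :
    inG S A (c • v) := by
  obtain ⟨a, ha⟩ := hv
  refine ⟨a, fun i => ?_⟩
  rw [mulVec_smul]
  exact S.mul_mem hc (ha i)

lemma inG_sum {K : Type} [Field K] (S : Subring K) {n : ℕ}
    (A : Matrix (Fin n) (Fin n) ℤ) {ι : Type} (s : Finset ι) (f : ι → Fin n → K)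
    (hf : ∀ j ∈ s, inG S A (f j)) : inG S A (∑ j ∈ s, f j) := by
  refine Finset.sum_induction f (inG S A) (fun _ _ => inG_add S A) ?_ hf
  exact ⟨0, fun i => by simpa using S.zero_mem⟩

lemma det_pow_mem {K : Type} [Field K] (S : Subring K) {n : ℕ}
    (A : Matrix (Fin n) (Fin n) ℤ) {v : Fin n → K} {m : ℕ}
    (h : ∀ i, (icast K A ^ m *ᵥ v) i ∈ S) (i : Fin n) : (A.det : K) ^ m * v i ∈ S := by
  have h1 := icast_mulVec_mem S ((A ^ m).adjugate) h i
  rw [mulVec_mulVec, ← icast_pow, ← icast_mul, adjugate_mul, det_pow] at h1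
  have : icast K (A.det ^ m • (1 : Matrix (Fin n) (Fin n) ℤ)) =
      (A.det : K) ^ m • (1 : Matrix (Fin n) (Fin n) K) := by
    rw [icast_smul, icast_one, Int.cast_pow]
  rw [this, smul_mulVec, one_mulVec] at h1
  exact h1

lemma zpow_iff {K : Type} [Field K] (S : Subring K) {n : ℕ}
    (A : Matrix (Fin n) (Fin n) ℤ) (hA : (A.det : K) ≠ 0) (v : Fin n → K) :
    (∃ (k : ℤ) (x : Fin n → K), (∀ i, x i ∈ S) ∧ v = icast K A ^ k *ᵥ x) ↔ inG S A v := by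
  have hu : IsUnit (icast K A).det := by rw [icast_det]; exact hA.isUnit
  constructor
  · rintro ⟨k, x, hx, rfl⟩
    obtain ⟨m, rfl | rfl⟩ := k.eq_nat_or_neg
    · refine ⟨0, fun i => ?_⟩
      rw [pow_zero, one_mulVec, zpow_natCast, ← icast_pow]
      exact icast_mulVec_mem S _ hx i
    · refine ⟨m, fun i => ?_⟩
      rw [Matrix.zpow_neg_natCast, mulVec_mulVec, mul_nonsing_inv, one_mulVec]
      · exact hx i
      · rw [det_pow]; exact hu.pow m
  · rintro ⟨m, hm⟩
    refine ⟨-(m : ℤ), _, hm, ?_⟩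
    rw [Matrix.zpow_neg_natCast, mulVec_mulVec, nonsing_inv_mul, one_mulVec]
    rw [det_pow]; exact hu.pow m

/-! ### Specialisation -/

/-- The integers inside `ℚ`. -/
def SZ : Subring ℚ := (Int.castRingHom ℚ).range

lemma mem_GA_iff {n : ℕ} (A : Matrix (Fin n) (Fin n) ℤ) (hA : A.det ≠ 0) (v : Fin n → ℚ) :
    v ∈ GA A ↔ inG SZ A v := by
  rw [← zpow_iff SZ A (by exact_mod_cast hA)]
  constructor
  · rintro ⟨k, x, hx⟩
    exact ⟨k, _, fun i => ⟨x i, rfl⟩, hx⟩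
  · rintro ⟨k, x, hx, hv⟩
    choose y hy using hx
    refine ⟨k, y, ?_⟩
    rw [hv]
    congr 1
    ext i
    exact (hy i).symm

lemma mem_GAp_iff {n : ℕ} (A : Matrix (Fin n) (Fin n) ℤ) (hA : A.det ≠ 0) (p : ℕ)
    [Fact p.Prime] (v : Fin n → ℚ_[p]) :
    v ∈ GAp A p ↔ inG (PadicInt.subring p) A v := by
  rw [← zpow_iff (PadicInt.subring p) A (by exact_mod_cast hA)]
  constructor
  · rintro ⟨k, x, hx⟩
    exact ⟨k, _, fun i => (x i).2, hx⟩
  · rintro ⟨k, x, hx, hv⟩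
    exact ⟨k, fun i => ⟨x i, hx i⟩, hv⟩

/-- casting a rational matrix to `ℚ_p`. -/
lemma cast_mulVec {n : ℕ} (p : ℕ) [Fact p.Prime] (M : Matrix (Fin n) (Fin n) ℚ)
    (v : Fin n → ℚ) :
    (fun i => (((M *ᵥ v) i : ℚ) : ℚ_[p])) =
      M.map (Rat.cast : ℚ → ℚ_[p]) *ᵥ (fun i => (v i : ℚ_[p])) := by
  ext i
  exact RingHom.map_mulVec (Rat.castHom ℚ_[p]) M v i

lemma cast_mul_map {n : ℕ} (p : ℕ) [Fact p.Prime] (M N : Matrix (Fin n) (Fin n) ℚ) :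
    (M * N).map (Rat.cast : ℚ → ℚ_[p]) =
      M.map (Rat.cast : ℚ → ℚ_[p]) * N.map (Rat.cast : ℚ → ℚ_[p]) :=
  Matrix.map_mul (f := Rat.castHom ℚ_[p])

lemma cast_icast {n : ℕ} (p : ℕ) [Fact p.Prime] (A : Matrix (Fin n) (Fin n) ℤ) (m : ℕ) :
    (icast ℚ A ^ m).map (Rat.cast : ℚ → ℚ_[p]) = icast ℚ_[p] A ^ m := by
  rw [← icast_pow, ← icast_pow]
  ext i j
  simp [icast]

lemma norm_of_SZ (p : ℕ) [Fact p.Prime] {q : ℚ} (hq : q ∈ SZ) :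
    (q : ℚ_[p]) ∈ PadicInt.subring p := by
  obtain ⟨z, rfl⟩ := hq
  simpa using intCast_mem (PadicInt.subring p) z

lemma inG_cast {n : ℕ} (p : ℕ) [Fact p.Prime] (A : Matrix (Fin n) (Fin n) ℤ)
    {v : Fin n → ℚ} (hv : inG SZ A v) :
    inG (PadicInt.subring p) A (fun i => (v i : ℚ_[p])) := by
  obtain ⟨m, hm⟩ := hv
  refine ⟨m, fun i => ?_⟩
  rw [← cast_icast, ← cast_mulVec]
  exact norm_of_SZ p (hm i)

lemma mem_SZ_of_local {q : ℚ}
    (h : ∀ (p : ℕ) [Fact p.Prime], (q : ℚ_[p]) ∈ PadicInt.subring p) : q ∈ SZ := by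
  have hden : q.den = 1 := by
    by_contra hne
    obtain ⟨p, hp, hpd⟩ := Nat.exists_prime_and_dvd hne
    haveI : Fact p.Prime := ⟨hp⟩
    have h1 : ‖(q : ℚ_[p])‖ ≤ 1 := h p
    have h2 : ‖((q.den : ℤ) : ℚ_[p])‖ < 1 :=
      Padic.norm_intCast_lt_one_iff.2 (by exact_mod_cast hpd)
    have h3 : ‖((q.num : ℤ) : ℚ_[p])‖ < 1 := by
      have : ((q.num : ℤ) : ℚ_[p]) = (q : ℚ_[p]) * ((q.den : ℤ) : ℚ_[p]) := by
        have := Rat.mul_den_eq_num q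
        exact_mod_cast congrArg (Rat.cast : ℚ → ℚ_[p]) this.symm
      rw [this, norm_mul]
      nlinarith [norm_nonneg (q : ℚ_[p]), norm_nonneg ((q.den : ℤ) : ℚ_[p])]
    rw [Padic.norm_intCast_lt_one_iff] at h3
    have h4 : p ∣ q.num.natAbs := Int.natCast_dvd.1 h3
    have := Nat.dvd_gcd h4 hpd
    rw [q.reduced.gcd_eq_one] at this
    exact hp.one_lt.ne' (Nat.dvd_one.1 this)
  exact ⟨q.num, by simpa using (Rat.den_eq_one_iff q).1 hden⟩

lemma norm_det_eq_one {p : ℕ} [Fact p.Prime] {d : ℤ} (h : ¬ (p : ℤ) ∣ d) :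
    ‖(d : ℚ_[p])‖ = 1 := by
  rw [← Padic.norm_intCast_lt_one_iff] at h
  exact le_antisymm (Padic.norm_int_le_one d) (not_lt.1 h)

lemma pow_eq_smul {n : ℕ} (A : Matrix (Fin n) (Fin n) ℤ) (p : ℕ)
    (h : A.charpoly.map (Int.castRingHom (ZMod p)) = X ^ n) :
    ∃ C : Matrix (Fin n) (Fin n) ℤ, A ^ n = (p : ℤ) • C := by
  have h1 := Matrix.aeval_self_charpoly (A.map (Int.castRingHom (ZMod p)))
  rw [Matrix.charpoly_map, h, map_pow, aeval_X] at h1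
  have h2 : (A ^ n).map (Int.castRingHom (ZMod p)) = 0 := by
    rw [← h1]
    exact map_pow (Int.castRingHom (ZMod p)).mapMatrix A n
  have h3 : ∀ i j, (p : ℤ) ∣ (A ^ n) i j := fun i j => by
    have := congrFun (congrFun h2 i) j
    exact (ZMod.intCast_zmod_eq_zero_iff_dvd _ p).1 (by simpa using this)
  choose C hC using h3
  exact ⟨Matrix.of C, by ext i j; simpa using hC i j⟩

lemma inG_of_good {n : ℕ} (A : Matrix (Fin n) (Fin n) ℤ) (p : ℕ) [hp : Fact p.Prime]
    (h : A.charpoly.map (Int.castRingHom (ZMod p)) = X ^ n) (v : Fin n → ℚ_[p]) :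
    inG (PadicInt.subring p) A v := by
  obtain ⟨C, hC⟩ := pow_eq_smul A p h
  have hcoord : ∀ i, ∃ k : ℕ, ‖(p : ℚ_[p]) ^ k * v i‖ ≤ 1 := fun i => by
    have hp1 : ‖(p : ℚ_[p])‖ < 1 := Padic.norm_p_lt_one
    have ht := (tendsto_pow_atTop_nhds_zero_of_lt_one (norm_nonneg (p : ℚ_[p])) hp1).mul_const
      (‖v i‖)
    rw [zero_mul] at ht
    obtain ⟨k, hk⟩ := (ht.eventually (gt_mem_nhds zero_lt_one)).exists
    exact ⟨k, by rw [norm_mul, norm_pow]; exact hk.le⟩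
  choose k hk using hcoord
  have hK : ∀ i, (((p : ℚ_[p]) ^ (∑ j, k j)) • v) i ∈ PadicInt.subring p := fun i => by
    rw [← Finset.add_sum_erase _ _ (Finset.mem_univ i), add_comm, pow_add]
    have : (((p : ℚ_[p]) ^ (∑ j ∈ Finset.univ.erase i, k j) * (p : ℚ_[p]) ^ k i) • v) i =
      (p : ℚ_[p]) ^ (∑ j ∈ Finset.univ.erase i, k j) * ((p : ℚ_[p]) ^ k i * v i) := by
      simp [mul_assoc]
    rw [this]
    exact Subring.mul_mem _ (Subring.pow_mem _ (by simpa using natCast_mem (PadicInt.subring p) p) _)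
      (hk i)
  refine ⟨n * ∑ j, k j, fun i => ?_⟩
  have h5 : icast ℚ_[p] A ^ (n * ∑ j, k j) *ᵥ v =
      icast ℚ_[p] (C ^ ∑ j, k j) *ᵥ (((p : ℚ_[p]) ^ (∑ j, k j)) • v) := by
    have h6 : icast ℚ_[p] ((p : ℤ) • C) = (p : ℚ_[p]) • icast ℚ_[p] C := by
      rw [icast_smul, Int.cast_natCast]
    rw [pow_mul, ← icast_pow, hC, h6, _root_.smul_pow, ← icast_pow, smul_mulVec, mulVec_smul]
  rw [h5]
  exact icast_mulVec_mem _ _ hK i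

lemma forward_local {n : ℕ} (A : Matrix (Fin n) (Fin n) ℤ) (hA : A.det ≠ 0)
    (T : Matrix (Fin n) (Fin n) ℚ) (hT : ∀ v, inG SZ A v → inG SZ A (T *ᵥ v))
    (p : ℕ) [Fact p.Prime] (v : Fin n → ℚ_[p]) (hv : inG (PadicInt.subring p) A v) :
    inG (PadicInt.subring p) A (T.map (Rat.cast : ℚ → ℚ_[p]) *ᵥ v) := by
  obtain ⟨m, hm⟩ := hv
  have hu : IsUnit (icast ℚ A ^ m).det := by
    rw [det_pow, icast_det]
    exact (isUnit_iff_ne_zero.2 (by exact_mod_cast hA)).pow m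
  obtain ⟨W, hWA, hAW⟩ : ∃ W, W * icast ℚ A ^ m = 1 ∧ icast ℚ A ^ m * W = 1 :=
    ⟨_, nonsing_inv_mul _ hu, mul_nonsing_inv _ hu⟩
  have h1 : T.map (Rat.cast : ℚ → ℚ_[p]) *ᵥ v =
      (T * W).map (Rat.cast : ℚ → ℚ_[p]) *ᵥ (icast ℚ_[p] A ^ m *ᵥ v) := by
    rw [← cast_icast, mulVec_mulVec, ← cast_mul_map, mul_assoc, hWA, mul_one]
  rw [h1, mulVec_eq_sum]
  refine inG_sum _ A _ _ fun j _ => ?_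
  have h2 : inG SZ A (T *ᵥ (W *ᵥ Pi.single j 1)) := by
    refine hT _ ⟨m, fun i => ?_⟩
    rw [mulVec_mulVec, hAW, one_mulVec]
    by_cases hij : i = j
    · subst hij; simpa using SZ.one_mem
    · simpa [hij] using SZ.zero_mem
  have h3 := inG_cast p A h2
  have h4 : (fun i => (((T *ᵥ (W *ᵥ Pi.single j 1)) i : ℚ) : ℚ_[p])) = ((T * W).map (Rat.cast : ℚ → ℚ_[p]))ᵀ j := by
    ext i
    rw [mulVec_mulVec, mulVec_single_one]
    rfl
  rw [h4] at h3
  rw [op_smul_eq_smul]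
  exact inG_smul _ A (hm j) h3

lemma backward {n : ℕ} (A : Matrix (Fin n) (Fin n) ℤ) (hA : A.det ≠ 0)
    (w : Fin n → ℚ)
    (h1 : ∀ (p : ℕ) [Fact p.Prime], ¬ (p : ℤ) ∣ A.det →
      ∀ i, (w i : ℚ_[p]) ∈ PadicInt.subring p)
    (h2 : ∀ (p : ℕ) [Fact p.Prime], (p : ℤ) ∣ A.det →
      inG (PadicInt.subring p) A (fun i => (w i : ℚ_[p]))) : inG SZ A w := by
  have h3 : ∀ p : ℕ, ∃ m : ℕ, ∀ [Fact p.Prime], (p : ℤ) ∣ A.det →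
      ∀ i, (icast ℚ_[p] A ^ m *ᵥ (fun i => (w i : ℚ_[p]))) i ∈ PadicInt.subring p := by
    intro p
    by_cases hp : p.Prime
    · haveI : Fact p.Prime := ⟨hp⟩
      by_cases hd : (p : ℤ) ∣ A.det
      · obtain ⟨m, hm⟩ := h2 p hd
        exact ⟨m, fun _ => hm⟩
      · exact ⟨0, fun h => absurd h hd⟩
    · exact ⟨0, fun {hf} => absurd hf.1 hp⟩
  choose k hk using h3
  refine ⟨A.det.natAbs.primeFactors.sup k, fun i => mem_SZ_of_local fun p hp => ?_⟩
  have h4 : ((icast ℚ A ^ (A.det.natAbs.primeFactors.sup k) *ᵥ w) i : ℚ_[p]) =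
      (icast ℚ_[p] A ^ (A.det.natAbs.primeFactors.sup k) *ᵥ (fun i => (w i : ℚ_[p]))) i := by
    rw [← cast_icast, ← cast_mulVec]
  rw [h4]
  by_cases hd : (p : ℤ) ∣ A.det
  · refine pow_mono_mem _ A (Finset.le_sup (f := k) ?_) (hk p hd) i
    exact Nat.mem_primeFactors.2 ⟨hp.1, Int.natCast_dvd.1 hd, Int.natAbs_ne_zero.2 hA⟩
  · exact pow_mono_mem _ A (Nat.zero_le _) (by simpa using h1 p hd) i

/-- `T(G_A) ⊆ G_A` iff `T ∈ M_n(ℤ[1/det A])` and `T` maps `Ḡ_{A,p}` into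
itself for every `p ∈ P'(A)`. -/
theorem stmt0 (n : ℕ) (A : Matrix (Fin n) (Fin n) ℤ) (hA : A.det ≠ 0)
    (T : Matrix (Fin n) (Fin n) ℚ) :
    (∀ v ∈ GA A, T *ᵥ v ∈ GA A) ↔
      ((∀ i j, T i j ∈ Rdet A) ∧
        ∀ (p : ℕ) [Fact p.Prime], p ∈ Pbad A →
          ∀ v ∈ GAp A p, (T.map (Rat.cast : ℚ → ℚ_[p])) *ᵥ v ∈ GAp A p) := by
  have hdq : (A.det : ℚ) ≠ 0 := by exact_mod_cast hA
  constructor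
  · intro h
    have hT : ∀ v, inG SZ A v → inG SZ A (T *ᵥ v) := fun v hv =>
      (mem_GA_iff A hA _).1 (h v ((mem_GA_iff A hA _).2 hv))
    refine ⟨fun i j => ?_, fun p _ _ v hv => ?_⟩
    · have h2 : inG SZ A (T *ᵥ (Pi.single j 1)) := by
        refine hT _ ⟨0, fun i => ?_⟩
        by_cases hij : i = j
        · subst hij; simpa using SZ.one_mem
        · simpa [hij] using SZ.zero_mem
      obtain ⟨m, hm⟩ := h2
      obtain ⟨z, hz⟩ := det_pow_mem SZ A hm i
      refine ⟨z, m, ?_⟩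
      rw [eq_div_iff (pow_ne_zero _ hdq), mul_comm]
      rw [mulVec_single_one] at hz
      exact hz.symm
    · exact (mem_GAp_iff A hA p _).2
        (forward_local A hA T hT p v ((mem_GAp_iff A hA p _).1 hv))
  · rintro ⟨hR, hP⟩ v hv
    rw [mem_GA_iff A hA] at hv ⊢
    refine backward A hA _ (fun p _ hd i => ?_) (fun p hpf hd => ?_)
    · have hn := norm_det_eq_one hd
      have hvi : ∀ j, (v j : ℚ_[p]) ∈ PadicInt.subring p := fun j => by
        obtain ⟨m, hm⟩ := inG_cast p A hv
        have h1 : ‖(A.det : ℚ_[p]) ^ m * (v j : ℚ_[p])‖ ≤ 1 := det_pow_mem _ A hm j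
        rw [norm_mul, norm_pow, hn, one_pow, one_mul] at h1
        exact h1
      have hTi : ∀ j, (T i j : ℚ_[p]) ∈ PadicInt.subring p := fun j => by
        obtain ⟨a, l, hal⟩ := hR i j
        change ‖(T i j : ℚ_[p])‖ ≤ 1
        rw [hal]
        rw [Rat.cast_div, Rat.cast_pow, Rat.cast_intCast, Rat.cast_intCast, norm_div, norm_pow, hn, one_pow, div_one]
        exact Padic.norm_int_le_one a
      rw [congrFun (cast_mulVec p T v) i]
      simp only [mulVec, dotProduct, Matrix.map_apply]
      exact Subring.sum_mem _ fun j _ => Subring.mul_mem _ (hTi j) (hvi j)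
    · by_cases hb : A.charpoly.map (Int.castRingHom (ZMod p)) = X ^ n
      · exact inG_of_good A p hb _
      · rw [cast_mulVec]
        exact (mem_GAp_iff A hA p _).1 (hP p ⟨hpf.1, hd, hb⟩ _
          ((mem_GAp_iff A hA p _).2 (inG_cast p A hv)))
end
end

section
/- Let A ∈ M_n(ℤ) be non-singular with h_A irreducible over ℚ and P'(A) ≠ ∅, and assume there exists a prime p with gcd(n, t_p) = 1. Let K be a number field with ring of integers O_K, and λ ∈ O_K a root of h_A with K = ℚ(λ). Then End(G_A) = {T ∈ M_n(ℚ) : T(G_A) ⊆ G_A} is a subring of M_n(ℚ), and there exists an injective ring homomorphism ι : End(G_A) → K with ι(A) = λ such that for every T ∈ End(G_A) there exists k ∈ ℕ with λ^k·ι(T) ∈ O_K; moreover, if T is invertible with T(G_A) = G_A, then both ι(T) and ι(T)⁻¹ satisfy this integrality condition (i.e., ι(T) is an S_λ-unit). -/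
open Matrix Polynomial

noncomputable section

/-- `t_p`: multiplicity of `0` as a root of `h_A` mod `p`. -/
def tp {n : ℕ} (A : Matrix (Fin n) (Fin n) ℤ) (p : ℕ) : ℕ :=
  Polynomial.rootMultiplicity 0 (A.charpoly.map (Int.castRingHom (ZMod p)))

theorem comb_block {X : Type*} [Fintype X] (r : X → X → Prop)
    (htr : ∀ i j : X, ∃ σ : X → X, Function.Injective σ ∧ σ i = j ∧ ∀ a b, r a b → r (σ a) (σ b))
    (I : Finset X) (hI : ∀ i j, r i j → j ∈ I → i ∈ I)
    (hcop : Nat.gcd (Fintype.card X) I.card = 1) : ∀ i j, r i j → i = j := by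
  classical
  let J : X → Finset X := fun j => Finset.univ.filter fun i => Relation.ReflTransGen r i j
  have memJ : ∀ i j, i ∈ J j ↔ Relation.ReflTransGen r i j := by intro i j; simp [J]
  have hle : ∀ i j, (J i).card ≤ (J j).card := by
    intro i j
    obtain ⟨σ, hσ, rfl, hr⟩ := htr i j
    refine Finset.card_le_card_of_injOn σ ?_ hσ.injOn
    intro a ha
    have := (memJ _ _).1 ha
    exact (memJ _ _).2 (Relation.ReflTransGen.lift σ hr _ _ this)
  have hcard : ∀ i j, (J i).card = (J j).card := fun i j => le_antisymm (hle i j) (hle j i)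
  have hself : ∀ i, i ∈ J i := fun i => (memJ _ _).2 .refl
  have hJeq : ∀ i j, i ∈ J j → J i = J j := by
    intro i j hij
    refine Finset.eq_of_subset_of_card_le ?_ (hle j i)
    intro a ha
    exact (memJ _ _).2 (((memJ _ _).1 ha).trans ((memJ _ _).1 hij))
  have hfib : ∀ i j, J i = J j ↔ i ∈ J j := fun i j => ⟨fun h => h ▸ hself i, hJeq i j⟩
  intro i j hij
  have hdvd : ∀ s : Finset X, (∀ a b, Relation.ReflTransGen r a b → b ∈ s → a ∈ s) →
      (J i).card ∣ s.card := by
    intro s hs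
    rw [Finset.card_eq_sum_card_image J s]
    refine Finset.dvd_sum ?_
    intro b hb
    obtain ⟨c, hc, rfl⟩ := Finset.mem_image.1 hb
    have : (s.filter fun x => J x = J c) = J c := by
      ext x
      simp only [Finset.mem_filter, hfib]
      exact ⟨fun h => h.2, fun h => ⟨hs _ _ ((memJ _ _).1 h) hc, h⟩⟩
    rw [this, hcard i c]
  have h1 : (J i).card ∣ Fintype.card X := hdvd Finset.univ (by simp)
  have h2 : (J i).card ∣ I.card := by
    apply hdvd
    intro a b hab hb
    induction hab using Relation.ReflTransGen.head_induction_on with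
    | refl => exact hb
    | head h1 _ ih => exact hI _ _ h1 ih
  have h3 : (J i).card = 1 := Nat.dvd_one.1 (hcop ▸ Nat.dvd_gcd h1 h2)
  rw [hcard i j, Finset.card_eq_one] at h3
  obtain ⟨x, hx⟩ := h3
  have a1 : i ∈ J j := (memJ _ _).2 (.single hij)
  have a2 := hself j
  rw [hx, Finset.mem_singleton] at a1 a2
  rw [a1, a2]


theorem Aq_det {n : ℕ} (A : Matrix (Fin n) (Fin n) ℤ) (hA : A.det ≠ 0) : IsUnit (Aq A).det := by
  have : (Aq A).det = (A.det : ℚ) := by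
    have := (Int.castRingHom ℚ).map_det A
    simpa [Aq] using this.symm
  rw [this, isUnit_iff_ne_zero]
  exact_mod_cast hA

theorem Aq_pow {n : ℕ} (A : Matrix (Fin n) (Fin n) ℤ) (k : ℕ) : Aq A ^ k = Aq (A ^ k) := by
  exact ((Int.castRingHom ℚ).mapMatrix.map_pow A k).symm

theorem Aq_mulVec {n : ℕ} (A : Matrix (Fin n) (Fin n) ℤ) (x : Fin n → ℤ) :
    (Aq A *ᵥ fun i => ((x i : ℚ))) = fun i => (((A *ᵥ x) i : ℤ) : ℚ) := by
  ext i
  simp [Aq, Matrix.mulVec, dotProduct]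

theorem mem_GA_iff_s6 {n : ℕ} (A : Matrix (Fin n) (Fin n) ℤ) (hA : A.det ≠ 0) (v : Fin n → ℚ) :
    v ∈ GA A ↔ ∃ (s : ℕ) (x : Fin n → ℤ), Aq A ^ s *ᵥ v = fun i => ((x i : ℚ)) := by
  have hu := Aq_det A hA
  constructor
  · rintro ⟨k, x, rfl⟩
    refine ⟨k.natAbs, (A ^ (k.natAbs + k).toNat) *ᵥ x, ?_⟩
    rw [← Aq_mulVec, ← Aq_pow, ← zpow_natCast, ← zpow_natCast, Matrix.mulVec_mulVec,
      ← Matrix.zpow_add hu]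
    congr 2
    omega
  · rintro ⟨s, x, h⟩
    refine ⟨-s, x, ?_⟩
    rw [← h, ← zpow_natCast, Matrix.mulVec_mulVec, ← Matrix.zpow_add hu]
    simp

theorem GA_mono {n : ℕ} (A : Matrix (Fin n) (Fin n) ℤ) (v : Fin n → ℚ) (s t : ℕ) (hst : s ≤ t)
    (h : ∃ (x : Fin n → ℤ), Aq A ^ s *ᵥ v = fun i => ((x i : ℚ))) :
    ∃ (x : Fin n → ℤ), Aq A ^ t *ᵥ v = fun i => ((x i : ℚ)) := by
  obtain ⟨x, hx⟩ := h
  obtain ⟨d, rfl⟩ := Nat.exists_eq_add_of_le' hst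
  refine ⟨A ^ d *ᵥ x, ?_⟩
  rw [pow_add, ← Matrix.mulVec_mulVec, hx, Aq_pow, Aq_mulVec]

theorem GA_add {n : ℕ} (A : Matrix (Fin n) (Fin n) ℤ) (hA : A.det ≠ 0) (v w : Fin n → ℚ)
    (hv : v ∈ GA A) (hw : w ∈ GA A) : v + w ∈ GA A := by
  rw [mem_GA_iff_s6 A hA] at *
  obtain ⟨s, hs⟩ := hv
  obtain ⟨t, ht⟩ := hw
  obtain ⟨x, hx⟩ := GA_mono A v s (s + t) (by omega) hs
  obtain ⟨y, hy⟩ := GA_mono A w t (s + t) (by omega) ht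
  refine ⟨s + t, x + y, ?_⟩
  rw [Matrix.mulVec_add, hx, hy]
  ext i; simp

theorem GA_neg {n : ℕ} (A : Matrix (Fin n) (Fin n) ℤ) (hA : A.det ≠ 0) (v : Fin n → ℚ)
    (hv : v ∈ GA A) : -v ∈ GA A := by
  rw [mem_GA_iff_s6 A hA] at *
  obtain ⟨s, x, hx⟩ := hv
  refine ⟨s, -x, ?_⟩
  rw [Matrix.mulVec_neg, hx]
  ext i; simp

theorem GA_zero {n : ℕ} (A : Matrix (Fin n) (Fin n) ℤ) (hA : A.det ≠ 0) : (0 : Fin n → ℚ) ∈ GA A := by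
  rw [mem_GA_iff_s6 A hA]
  exact ⟨0, 0, by ext i; simp⟩

def EndGA {n : ℕ} (A : Matrix (Fin n) (Fin n) ℤ) (hA : A.det ≠ 0) :
    Subring (Matrix (Fin n) (Fin n) ℚ) where
  carrier := {T | ∀ v ∈ GA A, T *ᵥ v ∈ GA A}
  mul_mem' := by
    intro a b ha hb v hv
    rw [← Matrix.mulVec_mulVec]
    exact ha _ (hb _ hv)
  one_mem' := by intro v hv; simpa using hv
  add_mem' := by
    intro a b ha hb v hv
    rw [Matrix.add_mulVec]
    exact GA_add A hA _ _ (ha _ hv) (hb _ hv)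
  zero_mem' := by intro v hv; simpa using GA_zero A hA
  neg_mem' := by
    intro a ha v hv
    rw [Matrix.neg_mulVec]
    exact GA_neg A hA _ (ha _ hv)

theorem End_clear {n : ℕ} (A : Matrix (Fin n) (Fin n) ℤ) (hA : A.det ≠ 0)
    (T : Matrix (Fin n) (Fin n) ℚ) (hT : ∀ v ∈ GA A, T *ᵥ v ∈ GA A) (k : ℕ) :
    ∃ (s : ℕ) (Y : Matrix (Fin n) (Fin n) ℤ), Aq A ^ s * T = Aq Y * Aq A ^ k := by
  have hu := Aq_det A hA
  have h1 : ∀ m : Fin n, ∃ s : ℕ, ∃ x : Fin n → ℤ,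
      Aq A ^ s *ᵥ (T *ᵥ ((Aq A ^ (-(k : ℤ))) *ᵥ (fun i => (((Pi.single m 1 : Fin n → ℤ) i : ℤ) : ℚ))))
        = fun i => ((x i : ℚ)) := by
    intro m
    rw [← mem_GA_iff_s6 A hA]
    exact hT _ ⟨_, _, rfl⟩
  choose s hs using h1
  have h2 : ∀ m, ∃ x : Fin n → ℤ,
      Aq A ^ (∑ i, s i) *ᵥ (T *ᵥ ((Aq A ^ (-(k : ℤ))) *ᵥ (fun i => (((Pi.single m 1 : Fin n → ℤ) i : ℤ) : ℚ))))
        = fun i => ((x i : ℚ)) := fun m =>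
    GA_mono A _ (s m) _ (Finset.single_le_sum (f := s) (fun _ _ => Nat.zero_le _) (Finset.mem_univ m)) (hs m)
  choose x hx using h2
  refine ⟨∑ i, s i, Matrix.of fun i m => x m i, ?_⟩
  have h3 : Aq A ^ (∑ i, s i) * T * Aq A ^ (-(k : ℤ)) = Aq (Matrix.of fun i m => x m i) := by
    ext i m
    have := congrFun (hx m) i
    have hsg : (fun i => (((Pi.single m 1 : Fin n → ℤ) i : ℤ) : ℚ)) = Pi.single m 1 := by
      ext j; by_cases h : j = m
      · subst h; simp
      · simp [h]
    rw [hsg, Matrix.mulVec_mulVec, Matrix.mulVec_mulVec, Matrix.mulVec_single_one] at this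
    simpa [Aq, Matrix.mul_assoc] using this
  rw [← h3, Matrix.mul_assoc _ (Aq A ^ (-(k : ℤ))), ← zpow_natCast (Aq A) k, ← Matrix.zpow_add hu]
  simp

theorem comm_mem_range {n : ℕ} {K : Type} [Field K] [NumberField K] (B : Matrix (Fin n) (Fin n) ℚ)
    (hn : 0 < n) (lam : K) (hgen : Algebra.adjoin ℚ ({lam} : Set K) = ⊤)
    (hdim : Module.finrank ℚ K = n)
    (ψ : K →ₐ[ℚ] Matrix (Fin n) (Fin n) ℚ) (hψ : ψ lam = B) (T : Matrix (Fin n) (Fin n) ℚ)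
    (hT : Commute B T) : T ∈ ψ.range := by
  have hcomm : ∀ y : K, Commute (ψ y) T := by
    intro y
    have hy : y ∈ Algebra.adjoin ℚ ({lam} : Set K) := by rw [hgen]; trivial
    induction hy using Algebra.adjoin_induction with
    | mem x hx => rw [Set.mem_singleton_iff.1 hx, hψ]; exact hT
    | algebraMap r => rw [ψ.commutes]; exact Algebra.commutes r T
    | add x y _ _ hx hy => rw [map_add]; exact hx.add_left hy
    | mul x y _ _ hx hy => rw [map_mul]; exact hx.mul_left hy
  let e : Fin n → ℚ := Pi.single ⟨0, hn⟩ 1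
  let f : K →ₗ[ℚ] (Fin n → ℚ) :=
    { toFun := fun y => ψ y *ᵥ e
      map_add' := by intro a b; rw [map_add, Matrix.add_mulVec]
      map_smul' := by intro a b; rw [map_smul, Matrix.smul_mulVec]; rfl }
  have hf : ∀ y, f y = ψ y *ᵥ e := fun _ => rfl
  have hinj : Function.Injective f := by
    rw [injective_iff_map_eq_zero]
    intro y hy
    by_contra hne
    have : e = 0 := by
      calc e = ψ (y⁻¹ * y) *ᵥ e := by rw [inv_mul_cancel₀ hne]; simp
        _ = ψ y⁻¹ *ᵥ (f y) := by rw [map_mul, hf, Matrix.mulVec_mulVec]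
        _ = 0 := by rw [hy]; simp
    have := congrFun this ⟨0, hn⟩
    simp [e] at this
  have hsurj : Function.Surjective f :=
    (LinearMap.injective_iff_surjective_of_finrank_eq_finrank (by simp [hdim])).1 hinj
  obtain ⟨x, hx⟩ := hsurj (T *ᵥ e)
  refine ⟨x, ?_⟩
  apply Matrix.toLin'.injective
  ext1 i
  ext1
  obtain ⟨y, hy⟩ := hsurj (Pi.single i 1)
  simp only [LinearMap.comp_apply, Matrix.toLin'_apply, LinearMap.single_apply]
  show (ψ x) *ᵥ _ = _
  rw [← hy, hf, Matrix.mulVec_mulVec, Matrix.mulVec_mulVec e T, ← (hcomm y).eq, ← Matrix.mulVec_mulVec e (ψ y) T, ← hx, hf,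
    Matrix.mulVec_mulVec, ← map_mul, ← map_mul, mul_comm]

theorem tp_card {k O X₀ : Type*} [Field k] [CommRing O] [Fintype X₀] (h : ℤ[X]) (φ : O →+* k) (p : ℕ)
    [Fact p.Prime] [CharP k p] (r : X₀ → O) [DecidablePred fun x => φ (r x) = 0]
    (hO : h.map (Int.castRingHom O) = ∏ x, (X - C (r x))) :
    rootMultiplicity 0 (h.map (Int.castRingHom (ZMod p))) =
      (Finset.univ.filter fun x => φ (r x) = 0).card := by
  classical
  rw [eq_rootMultiplicity_map (ZMod.castHom dvd_rfl k).injective 0, Polynomial.map_map, map_zero]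
  have e1 : (ZMod.castHom dvd_rfl k).comp (Int.castRingHom (ZMod p)) = φ.comp (Int.castRingHom O) :=
    RingHom.ext_int _ _
  rw [e1, ← Polynomial.map_map, hO, Polynomial.map_prod]
  simp only [Polynomial.map_sub, Polynomial.map_X, Polynomial.map_C]
  have e2 : ∏ x, (X - C (φ (r x))) =
      ((Finset.univ.val.map fun x => φ (r x)).map fun a => X - C a).prod := by
    rw [Multiset.map_map]; rfl
  rw [e2, ← count_roots, roots_multiset_prod_X_sub_C, Multiset.count_map]
  simp only [eq_comm (a := (0 : k))]
  rfl

theorem val_zero {L : Type*} [Field L] (v : Valuation L (WithZero (Multiplicative ℤ))) (x c : L)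
    (b : WithZero (Multiplicative ℤ)) (hx : v x < 1) (h : ∀ k : ℕ, v c ≤ v x ^ k * b) : c = 0 := by
  by_contra hc
  have hvc : v c ≠ 0 := (Valuation.ne_zero_iff v).2 hc
  have hb : b ≠ 0 := by
    rintro rfl
    exact hvc (by simpa using h 0)
  obtain ⟨k, hk⟩ := exists_pow_lt₀ hx (Units.mk0 (v c / b) (div_ne_zero hvc hb))
  have h1 := h k
  rw [Units.val_mk0, lt_div_iff₀ (zero_lt_iff.2 hb)] at hk
  exact absurd h1 (not_le.2 hk)

theorem val_bound {L : Type*} [Field L] {n : ℕ} (v : Valuation L (WithZero (Multiplicative ℤ)))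
    (E F : Matrix (Fin n) (Fin n) L) : ∃ b, ∀ (Y : Matrix (Fin n) (Fin n) L) (_ : ∀ i j, v (Y i j) ≤ 1) i j,
      v ((E * Y * F) i j) ≤ b := by
  have hb : ∀ E : Matrix (Fin n) (Fin n) L, ∃ b, ∀ i j, v (E i j) ≤ b := by
    intro E
    obtain ⟨b, hb⟩ := (Set.finite_range fun ij : Fin n × Fin n => v (E ij.1 ij.2)).bddAbove
    exact ⟨b, fun i j => hb ⟨(i, j), rfl⟩⟩
  obtain ⟨b, hE⟩ := hb E
  obtain ⟨c, hF⟩ := hb F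
  refine ⟨b * c, fun Y hY i j => ?_⟩
  rw [Matrix.mul_apply]
  refine Valuation.map_sum_le v fun k _ => ?_
  rw [map_mul]
  refine mul_le_mul' ?_ (hF _ _)
  rw [Matrix.mul_apply]
  refine Valuation.map_sum_le v fun l _ => ?_
  rw [map_mul]
  calc _ ≤ b * 1 := mul_le_mul' (hE _ _) (hY _ _)
    _ = b := mul_one b

/-- (unnormalised) projector to the `x`-eigenspace -/
def Ep {L : Type*} [Field L] {n : ℕ} (B : Matrix (Fin n) (Fin n) L) (x : L) : Matrix (Fin n) (Fin n) L :=
  aeval B (B.charpoly / (X - C x))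

theorem mul_Ep {L : Type*} [Field L] {n : ℕ} (B : Matrix (Fin n) (Fin n) L) (x : L)
    (hx : B.charpoly.IsRoot x) : B * Ep B x = x • Ep B x := by
  have h1 := mul_div_eq_iff_isRoot.2 hx
  have h2 := congrArg (aeval B) h1
  rw [map_mul, Matrix.aeval_self_charpoly, map_sub, aeval_X, aeval_C, sub_mul, sub_eq_zero,
    ← Algebra.smul_def] at h2
  exact h2

theorem Ep_mul {L : Type*} [Field L] {n : ℕ} (B : Matrix (Fin n) (Fin n) L) (x : L)
    (hx : B.charpoly.IsRoot x) : Ep B x * B = x • Ep B x := by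
  rw [← mul_Ep B x hx]
  have : Ep B x * aeval B (X : L[X]) = aeval B (X : L[X]) * Ep B x := by
    rw [Ep, ← map_mul, mul_comm, map_mul]
  simpa using this

theorem pow_mul_Ep {L : Type*} [Field L] {n : ℕ} (B : Matrix (Fin n) (Fin n) L) (x : L)
    (hx : B.charpoly.IsRoot x) (k : ℕ) : B ^ k * Ep B x = x ^ k • Ep B x := by
  induction k with
  | zero => simp
  | succ k ih => rw [pow_succ, Matrix.mul_assoc, mul_Ep B x hx, Matrix.mul_smul, ih, smul_smul, pow_succ, mul_comm]

theorem Ep_mul_pow {L : Type*} [Field L] {n : ℕ} (B : Matrix (Fin n) (Fin n) L) (x : L)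
    (hx : B.charpoly.IsRoot x) (k : ℕ) : Ep B x * B ^ k = x ^ k • Ep B x := by
  induction k with
  | zero => simp
  | succ k ih => rw [pow_succ, ← Matrix.mul_assoc, ih, Matrix.smul_mul, Ep_mul B x hx, smul_smul, pow_succ]

theorem Ep_sum {L : Type*} [Field L] {n : ℕ} (B : Matrix (Fin n) (Fin n) L) (R : Finset L)
    (hR : R.Nonempty) (hB : B.charpoly = ∏ x ∈ R, (X - C x)) :
    ∃ w : L → L, ∑ x ∈ R, w x • Ep B x = 1 := by
  classical
  refine ⟨fun x => Lagrange.nodalWeight R id x, ?_⟩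
  have h1 := congrArg (aeval B) (Lagrange.sum_basis (s := R) (v := id) Function.injective_id.injOn hR)
  rw [map_sum, map_one] at h1
  rw [← h1]
  refine Finset.sum_congr rfl fun x hx => ?_
  rw [Lagrange.basis_eq_prod_sub_inv_mul_nodal_div hx, map_mul, aeval_C, ← Algebra.smul_def, Ep, hB]
  rfl

theorem eq_zero_of_Ep {L : Type*} [Field L] {n : ℕ} (B M : Matrix (Fin n) (Fin n) L) (R : Finset L)
    (hR : R.Nonempty) (hB : B.charpoly = ∏ x ∈ R, (X - C x))
    (h : ∀ x ∈ R, ∀ y ∈ R, Ep B x * M * Ep B y = 0) : M = 0 := by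
  obtain ⟨w, hw⟩ := Ep_sum B R hR hB
  calc M = 1 * M * 1 := by simp
    _ = (∑ x ∈ R, w x • Ep B x) * M * (∑ x ∈ R, w x • Ep B x) := by rw [hw]
    _ = 0 := by
      rw [Finset.sum_mul, Finset.sum_mul]
      refine Finset.sum_eq_zero fun x hx => ?_
      rw [Finset.mul_sum]
      refine Finset.sum_eq_zero fun y hy => ?_
      rw [Matrix.smul_mul, Matrix.smul_mul, Matrix.mul_smul, h x hx y hy]
      simp

theorem Ep_map {L : Type*} [Field L] {n : ℕ} (B : Matrix (Fin n) (Fin n) L) (x : L) (σ : L →+* L)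
    (hσ : σ.mapMatrix B = B) : σ.mapMatrix (Ep B x) = Ep B (σ x) := by
  have hc : B.charpoly.map σ = B.charpoly := by
    rw [← Matrix.charpoly_map]
    congr 1
  have key : ∀ f : L[X], σ.mapMatrix (aeval B f) = aeval B (f.map σ) := by
    intro f
    induction f using Polynomial.induction_on' with
    | add p q hp hq => simp only [map_add, Polynomial.map_add, hp, hq]
    | monomial k a =>
      rw [Polynomial.map_monomial, aeval_monomial, aeval_monomial, map_mul, map_pow, hσ]
      congr 1
      ext i j
      simp [Matrix.algebraMap_matrix_apply, apply_ite σ]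
  rw [Ep, key, Polynomial.map_div, hc]
  simp [Ep]

/-- main vanishing -/
theorem vanish {L : Type*} [Field L] [NumberField L] {n : ℕ} (A : Matrix (Fin n) (Fin n) ℤ) (hA : A.det ≠ 0)
    (T : Matrix (Fin n) (Fin n) ℚ) (hT : ∀ v ∈ GA A, T *ᵥ v ∈ GA A)
    (B T' : Matrix (Fin n) (Fin n) L) (hB : B = (algebraMap ℚ L).mapMatrix (Aq A))
    (hT' : T' = (algebraMap ℚ L).mapMatrix T)
    (v : IsDedekindDomain.HeightOneSpectrum (NumberField.RingOfIntegers L))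
    (x y : L) (hx : B.charpoly.IsRoot x) (hy : B.charpoly.IsRoot y)
    (hvx : v.valuation L x = 1) (hvy : v.valuation L y < 1) :
    Ep B x * T' * Ep B y = 0 := by
  obtain ⟨b, hb⟩ := val_bound (v.valuation L) (Ep B x) (Ep B y)
  ext i j
  refine val_zero (v.valuation L) y _ b hvy fun k => ?_
  obtain ⟨s, Y, hY⟩ := End_clear A hA T hT k
  have h1 := congrArg (algebraMap ℚ L).mapMatrix hY
  rw [map_mul, map_mul, map_pow, map_pow, ← hB, ← hT'] at h1
  set Y' := (algebraMap ℚ L).mapMatrix (Aq Y) with hY'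
  have h2 : x ^ s • (Ep B x * T' * Ep B y) = y ^ k • (Ep B x * Y' * Ep B y) := by
    rw [← Matrix.smul_mul, ← Matrix.smul_mul, ← Ep_mul_pow B x hx, Matrix.mul_assoc (Ep B x), h1,
      ← Matrix.mul_assoc, Matrix.mul_assoc, pow_mul_Ep B y hy, Matrix.mul_smul]
  have h3 := congrArg (v.valuation L) (congrFun (congrFun h2 i) j)
  rw [Matrix.smul_apply, Matrix.smul_apply, smul_eq_mul, smul_eq_mul, map_mul, map_mul, map_pow,
    map_pow, hvx, one_pow, one_mul] at h3
  rw [h3]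
  refine mul_le_mul' le_rfl (hb _ ?_ i j)
  intro i j
  have : Y' i j = algebraMap (NumberField.RingOfIntegers L) L ((Y i j : ℤ)) := by
    simp [hY', Aq]
  rw [this]
  exact v.valuation_le_one _

theorem End_comm_aux (L : Type) [Field L] [NumberField L] [Normal ℚ L] {n : ℕ} (A : Matrix (Fin n) (Fin n) ℤ) (hA : A.det ≠ 0)
    (hirr : Irreducible (A.charpoly.map (Int.castRingHom ℚ)))
    (hspl : ((A.charpoly.map (Int.castRingHom ℚ)).map (algebraMap ℚ L)).Splits)
    (p : ℕ) (hp : p.Prime) (hcop : Nat.gcd n (tp A p) = 1)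
    (T : Matrix (Fin n) (Fin n) ℚ) (hT : ∀ v ∈ GA A, T *ᵥ v ∈ GA A) : Commute (Aq A) T := by
  classical
  have : Fact p.Prime := ⟨hp⟩
  set q : ℚ[X] := A.charpoly.map (Int.castRingHom ℚ) with hq
  have hqm : q.Monic := A.charpoly_monic.map _
  set B : Matrix (Fin n) (Fin n) L := (algebraMap ℚ L).mapMatrix (Aq A) with hB
  set T' : Matrix (Fin n) (Fin n) L := (algebraMap ℚ L).mapMatrix T with hT'
  have hBc : B.charpoly = q.map (algebraMap ℚ L) := by
    rw [hq, ← Matrix.charpoly_map, ← Matrix.charpoly_map]; rfl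
  have hsplit : B.charpoly.Splits := by rw [hBc]; exact hspl
  have hsep : B.charpoly.Separable := by rw [hBc]; exact hirr.separable.map
  set R : Finset L := B.charpoly.roots.toFinset with hR
  have hnodup : B.charpoly.roots.Nodup := nodup_roots hsep
  have hprod : B.charpoly = ∏ x ∈ R, (X - C x) := by
    conv_lhs => rw [hsplit.eq_prod_roots_of_monic B.charpoly_monic]
    rw [Finset.prod_eq_multiset_prod, hR, Multiset.toFinset_val, hnodup.dedup]
  have hBne : B.charpoly ≠ 0 := B.charpoly_monic.ne_zero
  have hroot : ∀ x, x ∈ R ↔ B.charpoly.IsRoot x := by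
    intro x; rw [hR, Multiset.mem_toFinset, mem_roots hBne]
  have hcardR : R.card = n := by
    have h1 := congrArg natDegree hprod
    rw [natDegree_finsetProd_X_sub_C_eq_card, Matrix.charpoly_natDegree_eq_dim, Fintype.card_fin] at h1
    exact h1.symm
  have hn : n ≠ 0 := by
    rintro rfl
    apply hirr.not_isUnit
    have h1 := Matrix.charpoly_natDegree_eq_dim A
    rw [Fintype.card_fin] at h1
    rw [hq, A.charpoly_monic.natDegree_eq_zero.1 h1]
    simp
  have hRne : R.Nonempty := by
    rw [← Finset.card_pos]; omega
  have hint : ∀ x : R, IsIntegral ℤ (x : L) := by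
    intro x
    refine ⟨A.charpoly, A.charpoly_monic, ?_⟩
    have h1 := (hroot x).1 x.2
    rw [hBc, hq, Polynomial.map_map, IsRoot, eval_map] at h1
    rw [← h1]
    congr 1
    exact RingHom.ext_int _ _
  let r : R → NumberField.RingOfIntegers L := fun x => ⟨x, hint x⟩
  have hO : A.charpoly.map (Int.castRingHom (NumberField.RingOfIntegers L)) = ∏ x, (X - C (r x)) := by
    apply Polynomial.map_injective (algebraMap (NumberField.RingOfIntegers L) L)
      (NumberField.RingOfIntegers.coe_injective)
    rw [Polynomial.map_map, Polynomial.map_prod]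
    simp only [Polynomial.map_sub, Polynomial.map_X, Polynomial.map_C]
    have e1 : A.charpoly.map ((algebraMap (NumberField.RingOfIntegers L) L).comp
        (Int.castRingHom (NumberField.RingOfIntegers L))) = B.charpoly := by
      rw [hBc, hq, Polynomial.map_map]
      congr 1
      exact RingHom.ext_int _ _
    rw [e1, hprod, ← Finset.prod_coe_sort]
    rfl
  -- a prime above p
  have hpnu : ¬ IsUnit ((p : ℕ) : NumberField.RingOfIntegers L) := by
    intro hu
    have h1 := hu.map (Algebra.norm ℤ)
    have h2 : Algebra.norm ℤ ((p : ℕ) : NumberField.RingOfIntegers L)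
        = (p : ℤ) ^ Module.finrank ℤ (NumberField.RingOfIntegers L) := by
      have := Algebra.norm_algebraMap (S := NumberField.RingOfIntegers L) (p : ℤ)
      simpa using this
    rw [h2, isUnit_pow_iff (Module.finrank_pos).ne', Int.isUnit_iff] at h1
    have := hp.two_le
    omega
  obtain ⟨P, hPm, hpP⟩ := exists_max_ideal_of_mem_nonunits hpnu
  have hp0 : ((p : ℕ) : NumberField.RingOfIntegers L) ≠ 0 := by exact_mod_cast hp.ne_zero
  let v : IsDedekindDomain.HeightOneSpectrum (NumberField.RingOfIntegers L) :=
    ⟨P, hPm.isPrime, fun h => hp0 (by rw [h] at hpP; simpa using hpP)⟩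
  let _ : Field (NumberField.RingOfIntegers L ⧸ P) := Ideal.Quotient.field P
  have : CharP (NumberField.RingOfIntegers L ⧸ P) p := by
    rw [CharP.charP_iff_prime_eq_zero hp]
    exact Ideal.Quotient.eq_zero_iff_mem.2 hpP
  let φ := Ideal.Quotient.mk P
  have htp : tp A p = (Finset.univ.filter fun x => φ (r x) = 0).card := tp_card _ φ p r hO
  have hphi : ∀ x : R, φ (r x) = 0 ↔ v.valuation L (x : L) < 1 := by
    intro x
    rw [Ideal.Quotient.eq_zero_iff_mem]
    exact (v.valuation_lt_one_iff_mem (K := L) (r x)).symm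
  have hle : ∀ x : R, v.valuation L (x : L) ≤ 1 := fun x => v.valuation_le_one (K := L) (r x)
  have key := comb_block (X := R) (fun x y => Ep B (x : L) * T' * Ep B (y : L) ≠ 0) ?_
    (Finset.univ.filter fun x => φ (r x) = 0) ?_ ?_
  · -- conclude
    have hcomm : B * T' - T' * B = 0 := by
      refine eq_zero_of_Ep B _ R hRne hprod fun x hx y hy => ?_
      have e1 : Ep B x * (B * T' - T' * B) * Ep B y = (x - y) • (Ep B x * T' * Ep B y) := by
        rw [mul_sub, sub_mul, ← Matrix.mul_assoc, Ep_mul B x ((hroot x).1 hx), ← Matrix.mul_assoc,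
          Matrix.mul_assoc _ B, mul_Ep B y ((hroot y).1 hy), sub_smul, Matrix.smul_mul, Matrix.smul_mul,
          Matrix.mul_smul]
      rw [e1]
      by_cases hxy : x = y
      · rw [hxy, sub_self, zero_smul]
      · have := key ⟨x, hx⟩ ⟨y, hy⟩
        by_contra hne
        refine hxy (congrArg Subtype.val (this ?_))
        intro h0
        apply hne
        rw [h0, smul_zero]
    rw [sub_eq_zero, hB, hT', ← map_mul, ← map_mul] at hcomm
    exact Matrix.map_injective (algebraMap ℚ L).injective hcomm
  · intro x y
    have hqx : ∀ z : R, minpoly ℚ (z : L) = q := by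
      intro z
      refine (minpoly.eq_of_irreducible_of_monic hirr ?_ hqm).symm
      have := (hroot z).1 z.2
      rwa [hBc, IsRoot, eval_map_algebraMap] at this
    obtain ⟨σ, hσ⟩ := minpoly.exists_algEquiv_of_root' (K := ℚ) (L := L) (x := (y : L)) (y := (x : L))
      (Algebra.IsAlgebraic.isAlgebraic _) (by rw [hqx x, ← hqx y]; exact minpoly.aeval _ _)
    have hfix : ∀ M : Matrix (Fin n) (Fin n) ℚ, (σ : L →+* L).mapMatrix ((algebraMap ℚ L).mapMatrix M) =
        (algebraMap ℚ L).mapMatrix M := by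
      intro M
      ext i j
      simp
    have hmem : ∀ z : R, σ (z : L) ∈ R := by
      intro z
      have := (hroot z).1 z.2
      rw [hroot]
      rw [hBc, IsRoot, eval_map_algebraMap] at this ⊢
      rw [aeval_algEquiv, AlgHom.comp_apply, this]
      simp
    refine ⟨fun z => ⟨σ z, hmem z⟩, ?_, Subtype.ext hσ, ?_⟩
    · intro a b hab
      exact Subtype.ext (σ.injective (congrArg Subtype.val hab))
    · intro a b hab h0
      apply hab
      have e := Ep_map B (a : L) (σ : L →+* L) (hfix _)
      have e' := Ep_map B (b : L) (σ : L →+* L) (hfix _)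
      have e'' : (σ : L →+* L).mapMatrix T' = T' := hfix _
      have h1 : (σ : L →+* L).mapMatrix (Ep B (a : L) * T' * Ep B (b : L)) = 0 := by
        rw [map_mul, map_mul, e, e', e'']
        exact h0
      refine Matrix.map_injective (σ : L →+* L).injective ?_
      refine Eq.trans h1 ?_
      ext i j; simp
  · intro x y hxy hy
    rw [Finset.mem_filter] at hy ⊢
    refine ⟨Finset.mem_univ _, ?_⟩
    by_contra hx
    rw [hphi] at hx hy
    exact hxy (vanish A hA T hT B T' hB hT' v x y ((hroot x).1 x.2) ((hroot y).1 y.2)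
      (le_antisymm (hle x) (not_lt.1 hx)) hy.2)
  · rw [← htp, Fintype.card_coe, hcardR]
    exact hcop


theorem End_comm {n : ℕ} (A : Matrix (Fin n) (Fin n) ℤ) (hA : A.det ≠ 0)
    (hirr : Irreducible (A.charpoly.map (Int.castRingHom ℚ)))
    (p : ℕ) (hp : p.Prime) (hcop : Nat.gcd n (tp A p) = 1)
    (T : Matrix (Fin n) (Fin n) ℚ) (hT : ∀ v ∈ GA A, T *ᵥ v ∈ GA A) : Commute (Aq A) T := by
  have : Normal ℚ (A.charpoly.map (Int.castRingHom ℚ)).SplittingField := by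
    convert @Normal.of_isSplittingField ℚ _ (A.charpoly.map (Int.castRingHom ℚ)).SplittingField _
      _ (A.charpoly.map (Int.castRingHom ℚ)) (IsSplittingField.splittingField _)
  have : NumberField (A.charpoly.map (Int.castRingHom ℚ)).SplittingField := ⟨⟩
  exact End_comm_aux (A.charpoly.map (Int.castRingHom ℚ)).SplittingField A hA hirr
    (SplittingField.splits _) p hp hcop T hT

/-- `End(G_A)` is a subring of `M_n(ℚ)` which embeds into `K = ℚ(λ)`,
taking `A` to `λ`, with image inside `O_{K,λ} = O_K[λ⁻¹]`, and sending automorphisms of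
`G_A` to `S_λ`-units. -/
theorem stmt6 (n : ℕ) (A : Matrix (Fin n) (Fin n) ℤ) (hA : A.det ≠ 0)
    (hirr : Irreducible (A.charpoly.map (Int.castRingHom ℚ)))
    (hP' : (Pbad A).Nonempty)
    (hcop : ∃ p : ℕ, p.Prime ∧ Nat.gcd n (tp A p) = 1)
    (K : Type) [Field K] [NumberField K] (lam : K)
    (hint : IsIntegral ℤ lam)
    (hroot : Polynomial.aeval lam (A.charpoly.map (Int.castRingHom ℚ)) = 0)
    (hgenK : Algebra.adjoin ℚ ({lam} : Set K) = ⊤) :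
    ∃ S : Subring (Matrix (Fin n) (Fin n) ℚ),
      (S : Set (Matrix (Fin n) (Fin n) ℚ)) = {T | ∀ v ∈ GA A, T *ᵥ v ∈ GA A} ∧
      ∃ ι : S →+* K, Function.Injective ι ∧
        (∀ h : Aq A ∈ S, ι ⟨Aq A, h⟩ = lam) ∧
        (∀ T : S, ∃ k : ℕ, IsIntegral ℤ (lam ^ k * ι T)) ∧
        (∀ T : S, IsUnit (T : Matrix (Fin n) (Fin n) ℚ) →
          (fun w => (T : Matrix (Fin n) (Fin n) ℚ) *ᵥ w) '' GA A = GA A →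
          (∃ k : ℕ, IsIntegral ℤ (lam ^ k * ι T)) ∧
          (∃ k : ℕ, IsIntegral ℤ (lam ^ k * (ι T)⁻¹))) := by
  obtain ⟨p, hp, hgcd⟩ := hcop
  have hcomm := End_comm A hA hirr p hp hgcd
  set q : ℚ[X] := A.charpoly.map (Int.castRingHom ℚ) with hq
  have hqm : q.Monic := A.charpoly_monic.map _
  have hmin : minpoly ℚ lam = q := (minpoly.eq_of_irreducible_of_monic hirr hroot hqm).symm
  have hqA : q = (Aq A).charpoly := (Matrix.charpoly_map A (Int.castRingHom ℚ)).symm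
  have hqdeg : q.natDegree = n := by
    rw [hqA, Matrix.charpoly_natDegree_eq_dim, Fintype.card_fin]
  have hn : 0 < n := by
    have := hirr.natDegree_pos
    omega
  haveI : Nonempty (Fin n) := ⟨⟨0, hn⟩⟩
  have hlamQ : IsIntegral ℚ lam := hint.tower_top
  let pb := PowerBasis.ofAdjoinEqTop hlamQ hgenK
  have hgen : pb.gen = lam := PowerBasis.ofAdjoinEqTop_gen hlamQ hgenK
  have hdim : Module.finrank ℚ K = n := by
    rw [pb.finrank, ← pb.natDegree_minpoly, hgen, hmin, hqdeg]
  have hann : aeval (Aq A) (minpoly ℚ pb.gen) = 0 := by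
    rw [hgen, hmin, hqA, Matrix.aeval_self_charpoly]
  let ψ : K →ₐ[ℚ] Matrix (Fin n) (Fin n) ℚ := pb.lift (Aq A) hann
  have hψ : ψ lam = Aq A := by
    have := pb.lift_gen (Aq A) hann
    rwa [hgen] at this
  have hψinj : Function.Injective ψ := ψ.toRingHom.injective
  let e : K ≃ₐ[ℚ] ψ.range := AlgEquiv.ofInjective ψ hψinj
  have he : ∀ x : ψ.range, ψ (e.symm x) = x := fun x =>
    congrArg Subtype.val (e.apply_symm_apply x)
  let S := EndGA A hA
  have hS : ∀ T : S, (T : Matrix (Fin n) (Fin n) ℚ) ∈ ψ.range := fun T =>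
    comm_mem_range (Aq A) hn lam hgenK hdim ψ hψ _ (hcomm _ T.2)
  let inc : S →+* ψ.range := S.subtype.codRestrict ψ.range hS
  let ι : S →+* K := (e.symm : ψ.range →+* K).comp inc
  have hι : ∀ T : S, ψ (ι T) = T := fun T => he (inc T)
  have hintg : ∀ T : S, ∃ k : ℕ, IsIntegral ℤ (lam ^ k * ι T) := by
    intro T
    obtain ⟨s, Y, hY⟩ := End_clear A hA T T.2 0
    refine ⟨s, ?_⟩
    rw [← isIntegral_algHom_iff (ψ.restrictScalars ℤ) hψinj]
    have h1 : (ψ.restrictScalars ℤ) (lam ^ s * ι T) = Aq Y := by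
      show ψ (lam ^ s * ι T) = Aq Y
      rw [map_mul, map_pow, hψ, hι, hY]
      simp
    rw [h1]
    exact (Matrix.isIntegral Y).map (Algebra.ofId ℤ ℚ).mapMatrix
  refine ⟨S, rfl, ι, ?_, ?_, hintg, ?_⟩
  · intro a b hab
    apply Subtype.ext
    rw [← hι a, ← hι b, hab]
  · intro h
    apply hψinj
    rw [hι, hψ]
  · intro T hTu hTG
    refine ⟨hintg T, ?_⟩
    have hdet : IsUnit (T : Matrix (Fin n) (Fin n) ℚ).det := (Matrix.isUnit_iff_isUnit_det _).1 hTu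
    have hinv : ∀ v ∈ GA A, (T : Matrix (Fin n) (Fin n) ℚ)⁻¹ *ᵥ v ∈ GA A := by
      intro v hv
      rw [← hTG] at hv
      obtain ⟨w, hw, rfl⟩ := hv
      simpa [Matrix.mulVec_mulVec, Matrix.nonsing_inv_mul _ hdet] using hw
    let T2 : S := ⟨(T : Matrix (Fin n) (Fin n) ℚ)⁻¹, hinv⟩
    have h2 : T2 * T = 1 := Subtype.ext (Matrix.nonsing_inv_mul _ hdet)
    have h3 : (ι T)⁻¹ = ι T2 := by
      have := congrArg ι h2
      rw [map_mul, map_one] at this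
      exact (eq_inv_of_mul_eq_one_left this).symm
    rw [h3]
    exact hintg T2
end
end

section
/- Let A ∈ M_n(ℤ) be non-singular with h_A irreducible over ℚ and P'(A) ≠ ∅, and assume there exists a prime p with gcd(n, t_p) = 1. Let K be a number field with ring of integers O_K, λ ∈ O_K a root of h_A with K = ℚ(λ), and let u ∈ K^n be a nonzero vector with (A over K)·u = λ·u. Then for every T ∈ M_n(ℚ) with T·x ∈ G_A for all x ∈ G_A, there exists x ∈ K with λ^k·x ∈ O_K for some k ∈ ℕ such that (T over K)·u = x·u. -/
open Matrix Polynomial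

noncomputable section

theorem comb_aux {G E : Type*} [Group G] [Fintype E] (act : G → E → E)
    (hone : ∀ x, act 1 x = x) (hmul : ∀ g h x, act (g * h) x = act g (act h x))
    (htrans : ∀ x y, ∃ g, act g x = y) (S : Finset E)
    (hc : Nat.gcd (Fintype.card E) S.card = 1) (σ τ : E)
    (h : ∀ g, act g τ ∈ S → act g σ ∈ S) : σ = τ := by
  classical
  let B : E → Finset E := fun τ => Finset.univ.filter fun σ => ∀ g, act g τ ∈ S → act g σ ∈ S
  have memB : ∀ σ τ, σ ∈ B τ ↔ ∀ g, act g τ ∈ S → act g σ ∈ S := by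
    intro σ τ; simp [B]
  have hinv : ∀ g x, act g⁻¹ (act g x) = x := by
    intro g x; rw [← hmul]; simp [hone]
  have hinj : ∀ g, Function.Injective (act g) := by
    intro g x y hxy
    rw [← hinv g x, hxy, hinv]
  have hle : ∀ x y, (B x).card ≤ (B y).card := by
    intro x y
    obtain ⟨g, rfl⟩ := htrans x y
    apply Finset.card_le_card_of_injOn (act g)
    · intro z hz
      have hz' := (memB _ _).1 hz
      refine (memB _ _).2 ?_
      intro g' hg'
      rw [← hmul] at hg' ⊢
      exact hz' _ hg'
    · exact (hinj g).injOn
  have hself : ∀ x, x ∈ B x := fun x => (memB _ _).2 fun g hg => hg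
  have hsub : ∀ x y, x ∈ B y → B x = B y := by
    intro x y hxy
    apply Finset.eq_of_subset_of_card_le _ (hle y x)
    intro z hz
    exact (memB _ _).2 fun g hg => (memB _ _).1 hz g ((memB _ _).1 hxy g hg)
  have key : ∀ U : Finset E, (∀ x y, y ∈ U → x ∈ B y → x ∈ U) → (B τ).card ∣ U.card := by
    intro U hU
    rw [Finset.card_eq_sum_card_image B U]
    apply Finset.dvd_sum
    intro b hb
    obtain ⟨y, hy, rfl⟩ := Finset.mem_image.1 hb
    have : U.filter (fun x => B x = B y) = B y := by
      ext x
      rw [Finset.mem_filter]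
      constructor
      · rintro ⟨_, hx⟩
        rw [← hx]; exact hself x
      · intro hx
        exact ⟨hU x y hy hx, hsub x y hx⟩
    rw [this, le_antisymm (hle τ y) (hle y τ)]
  have h1 : (B τ).card ∣ Fintype.card E := key Finset.univ (by simp)
  have h2 : (B τ).card ∣ S.card := by
    apply key
    intro x y hy hx
    have := (memB _ _).1 hx 1
    rw [hone, hone] at this
    exact this hy
  have h3 : (B τ).card = 1 := Nat.dvd_one.1 (hc ▸ Nat.dvd_gcd h1 h2)
  exact Finset.card_le_one.1 h3.le σ ((memB _ _).2 h) τ (hself τ)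

theorem int_aux {n : ℕ} (A : Matrix (Fin n) (Fin n) ℤ) (hA : A.det ≠ 0)
    (T : Matrix (Fin n) (Fin n) ℚ) (hT : ∀ v ∈ GA A, T *ᵥ v ∈ GA A) (m : ℕ) :
    ∃ (k : ℕ) (M : Matrix (Fin n) (Fin n) ℤ),
      Aq A ^ k * T = M.map (Int.cast : ℤ → ℚ) * Aq A ^ m := by
  have hdet : IsUnit (Aq A).det := by
    have : (Aq A).det = (A.det : ℚ) := by
      rw [Aq]
      exact ((Int.castRingHom ℚ).map_det A).symm
    rw [this]
    exact isUnit_iff_ne_zero.2 (by exact_mod_cast hA)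
  have h1 : ∀ j : Fin n, ∃ (k : ℤ) (x : Fin n → ℤ),
      T *ᵥ ((Aq A ^ (-(m : ℤ))) *ᵥ Pi.single j 1) = (Aq A ^ k) *ᵥ fun i => ((x i : ℚ)) := by
    intro j
    apply hT
    refine ⟨-m, Pi.single j 1, ?_⟩
    congr 1
    ext i
    by_cases hij : i = j
    · subst hij; simp
    · simp [hij]
  choose kk x hx using h1
  obtain ⟨k, hk⟩ : ∃ k : ℕ, ∀ j, 0 ≤ (k : ℤ) + kk j := by
    refine ⟨∑ j, (kk j).natAbs, fun j => ?_⟩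
    have := Finset.single_le_sum (f := fun j => (kk j).natAbs) (fun i _ => Nat.zero_le _)
      (Finset.mem_univ j)
    omega
  choose l hl using fun j => Int.eq_ofNat_of_zero_le (hk j)
  refine ⟨k, Matrix.of fun i j => (A ^ (l j) *ᵥ x j) i, ?_⟩
  have h2 : Aq A ^ k * T * Aq A ^ (-(m : ℤ)) =
      (Matrix.of fun i j => (A ^ (l j) *ᵥ x j) i).map (Int.cast : ℤ → ℚ) := by
    apply Matrix.ext_of_mulVec_single
    intro j
    rw [← Matrix.mulVec_mulVec, ← Matrix.mulVec_mulVec, hx, Matrix.mulVec_mulVec,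
      ← zpow_natCast (Aq A) k, ← Matrix.zpow_add hdet, hl, zpow_natCast]
    ext i
    have : Aq A ^ (l j) = (A ^ (l j)).map (Int.cast : ℤ → ℚ) := by
      rw [Aq]
      exact ((Int.castRingHom ℚ).mapMatrix.map_pow A (l j)).symm
    rw [this]
    simp [Matrix.mulVec, dotProduct, Pi.single_apply]
  rw [← h2, mul_assoc, ← zpow_natCast (Aq A) m, ← Matrix.zpow_add hdet]
  simp

theorem pow_mulVec_aux {n : ℕ} {R : Type*} [CommRing R] (A : Matrix (Fin n) (Fin n) R)
    (u : Fin n → R) (b : R) (h : A *ᵥ u = b • u) (m : ℕ) : A ^ m *ᵥ u = b ^ m • u := by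
  induction m with
  | zero => simp
  | succ m ih =>
    rw [pow_succ, ← Matrix.mulVec_mulVec, h, Matrix.mulVec_smul, ih, smul_smul, pow_succ, mul_comm]

theorem pow_vecMul_aux {n : ℕ} {R : Type*} [CommRing R] (A : Matrix (Fin n) (Fin n) R)
    (u : Fin n → R) (b : R) (h : u ᵥ* A = b • u) (m : ℕ) : u ᵥ* A ^ m = b ^ m • u := by
  induction m with
  | zero => simp
  | succ m ih =>
    rw [pow_succ, ← Matrix.vecMul_vecMul, ih, Matrix.smul_vecMul, h, smul_smul, pow_succ]

open NumberField in
theorem key_aux {n : ℕ} (A : Matrix (Fin n) (Fin n) ℤ) (hA : A.det ≠ 0)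
    (T : Matrix (Fin n) (Fin n) ℚ) (hT : ∀ v ∈ GA A, T *ᵥ v ∈ GA A)
    (L : Type) [Field L] [NumberField L] (P : Ideal (𝓞 L)) [P.IsMaximal]
    (a b : 𝓞 L) (w u : Fin n → 𝓞 L)
    (hw : (fun i => (w i : L)) ᵥ* (A.map (Int.cast : ℤ → L)) = (a : L) • fun i => (w i : L))
    (hu : (A.map (Int.cast : ℤ → L)) *ᵥ (fun i => (u i : L)) = (b : L) • fun i => (u i : L))
    (ha : a ∉ P) (hb : b ∈ P) :
    (fun i => (w i : L)) ⬝ᵥ (T.map (algebraMap ℚ L) *ᵥ fun i => (u i : L)) = 0 := by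
  set c := (fun i => (w i : L)) ⬝ᵥ (T.map (algebraMap ℚ L) *ᵥ fun i => (u i : L)) with hc
  have h1 : ∀ m : ℕ, ∃ (k : ℕ) (r : 𝓞 L), (a : L) ^ k * c = (b : L) ^ m * (r : L) := by
    intro m
    obtain ⟨k, M, hM⟩ := int_aux A hA T hT m
    refine ⟨k, w ⬝ᵥ (M.map (Int.cast : ℤ → 𝓞 L) *ᵥ u), ?_⟩
    have hM' := congrArg (fun N => (algebraMap ℚ L).mapMatrix N) hM
    simp only [map_mul, map_pow] at hM'
    have e1 : (algebraMap ℚ L).mapMatrix (Aq A) = A.map (Int.cast : ℤ → L) := by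
      ext i j; simp [Aq]
    have e2 : (algebraMap ℚ L).mapMatrix (M.map (Int.cast : ℤ → ℚ)) =
        M.map (Int.cast : ℤ → L) := by
      ext i j; simp
    rw [e1, e2] at hM'
    have e3 : ((w ⬝ᵥ (M.map (Int.cast : ℤ → 𝓞 L) *ᵥ u) : 𝓞 L) : L) =
        (fun i => (w i : L)) ⬝ᵥ (M.map (Int.cast : ℤ → L) *ᵥ fun i => (u i : L)) := by
      simp [dotProduct, Matrix.mulVec]
    rw [e3]
    have e4 := congrArg (fun N => (fun i => (w i : L)) ⬝ᵥ (N *ᵥ fun i => (u i : L))) hM'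
    simp only [← Matrix.mulVec_mulVec] at e4
    rw [pow_mulVec_aux _ _ _ hu, Matrix.dotProduct_mulVec, pow_vecMul_aux _ _ _ hw] at e4
    simpa [Matrix.mulVec_smul] using e4
  obtain ⟨k0, d, hd⟩ := h1 0
  rw [pow_zero, one_mul] at hd
  have h2 : d ∈ ⨅ m : ℕ, P ^ m := by
    rw [Submodule.mem_iInf]
    intro m
    obtain ⟨k, r, hr⟩ := h1 m
    have h3 : a ^ k * d = b ^ m * (a ^ k0 * r) := by
      apply RingOfIntegers.coe_injective
      simp only [map_mul, map_pow]
      change (a : L) ^ k * (d : L) = (b : L) ^ m * ((a : L) ^ k0 * (r : L))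
      rw [← hd, mul_left_comm, hr]; ring
    have h4 : a ^ k * d ∈ P ^ m := by
      rw [h3]
      exact Ideal.mul_mem_right _ _ (Ideal.pow_mem_pow hb m)
    refine (Ideal.IsMaximal.mul_mem_pow P h4).resolve_left ?_
    intro h5
    exact ha (Ideal.IsPrime.mem_of_pow_mem inferInstance _ h5)
  rw [Ideal.iInf_pow_eq_bot_of_isDomain P (Ideal.IsPrime.ne_top inferInstance)] at h2
  have h0 : d = 0 := by simpa using h2
  rw [h0] at hd
  have ha0 : (a : L) ≠ 0 := by
    intro h
    apply ha
    have : a = 0 := by exact_mod_cast h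
    rw [this]; exact P.zero_mem
  have := mul_eq_zero.1 (hd.trans (map_zero _))
  exact this.resolve_left (pow_ne_zero _ ha0)

open NumberField in
theorem tp_aux {n : ℕ} (A : Matrix (Fin n) (Fin n) ℤ) (p : ℕ) (hp : p.Prime)
    (L : Type) [Field L] [NumberField L] (P : Ideal (𝓞 L)) [P.IsMaximal]
    (hpP : (p : 𝓞 L) ∈ P) {E : Type*} [Fintype E] (z : E → 𝓞 L)
    (hz : A.charpoly.map (Int.castRingHom (𝓞 L)) = ∏ σ, (X - C (z σ)))
    (S : Finset E) (hS : ∀ σ, σ ∈ S ↔ z σ ∈ P) :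
    tp A p = S.card := by
  classical
  have : Fact p.Prime := ⟨hp⟩
  let _ : Field (𝓞 L ⧸ P) := Ideal.Quotient.field P
  have hp0 : (p : 𝓞 L ⧸ P) = 0 := by
    have := Ideal.Quotient.eq_zero_iff_mem.2 hpP
    simpa using this
  have : CharP (𝓞 L ⧸ P) p := by
    have h1 : ringChar (𝓞 L ⧸ P) ∣ p := ringChar.dvd hp0
    have h2 : ringChar (𝓞 L ⧸ P) = p := by
      rcases (Nat.dvd_prime hp).1 h1 with h | h
      · exact absurd h CharP.ringChar_ne_one
      · exact h
    exact ringChar.of_eq h2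
  let f : ZMod p →+* (𝓞 L ⧸ P) := ZMod.castHom (dvd_refl p) _
  have h1 : (A.charpoly.map (Int.castRingHom (ZMod p))).map f =
      ∏ σ, (X - C (Ideal.Quotient.mk P (z σ))) := by
    rw [Polynomial.map_map, RingHom.ext_int (f.comp (Int.castRingHom (ZMod p)))
      ((Ideal.Quotient.mk P).comp (Int.castRingHom (𝓞 L))), ← Polynomial.map_map, hz,
      Polynomial.map_prod]
    simp
  rw [tp, Polynomial.eq_rootMultiplicity_map (f := f) f.injective, h1, map_zero,
    ← Polynomial.count_roots]
  have h2 : (∏ σ, (X - C (Ideal.Quotient.mk P (z σ)))).roots =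
      Finset.univ.val.map fun σ => Ideal.Quotient.mk P (z σ) := by
    have := Polynomial.roots_multiset_prod_X_sub_C
      (Finset.univ.val.map fun σ => Ideal.Quotient.mk P (z σ))
    rw [Multiset.map_map] at this
    exact this
  rw [h2, Multiset.count_map]
  have h3 : S = Finset.univ.filter fun σ => 0 = Ideal.Quotient.mk P (z σ) := by
    ext σ
    rw [hS, Finset.mem_filter, eq_comm, Ideal.Quotient.eq_zero_iff_mem]
    simp
  rw [h3]; rfl

theorem span_aux {n : ℕ} {L E : Type*} [Field L] [Fintype E] (A : Matrix (Fin n) (Fin n) L)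
    (hcard : Fintype.card E = n) (z : E → L) (hz : Function.Injective z) (w : E → Fin n → L)
    (hw0 : ∀ σ, w σ ≠ 0) (hw : ∀ σ, w σ ᵥ* A = z σ • w σ) (v : Fin n → L)
    (hv : ∀ σ, w σ ⬝ᵥ v = 0) : v = 0 := by
  have hli : LinearIndependent L w := by
    apply Module.End.eigenvectors_linearIndependent' (Matrix.toLin' Aᵀ) z hz
    intro σ
    refine ⟨?_, hw0 σ⟩
    rw [Module.End.mem_eigenspace_iff, Matrix.toLin'_apply, Matrix.mulVec_transpose, hw]
  have hspan : Submodule.span L (Set.range w) = ⊤ := by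
    apply hli.span_eq_top_of_card_eq_finrank'
    simp [hcard]
  have : ∀ y : Fin n → L, y ⬝ᵥ v = 0 := by
    intro y
    have hy : y ∈ Submodule.span L (Set.range w) := hspan ▸ Submodule.mem_top
    induction hy using Submodule.span_induction with
    | mem x h => obtain ⟨σ, rfl⟩ := h; exact hv σ
    | zero => simp
    | add x y _ _ h1 h2 => rw [add_dotProduct, h1, h2, add_zero]
    | smul a x _ h => rw [smul_dotProduct, h, smul_zero]
  ext i
  have := this (Pi.single i 1)
  simpa using this

open NumberField in
theorem exists_maximal_aux (p : ℕ) (hp : p.Prime) (L : Type) [Field L] [NumberField L] :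
    ∃ P : Ideal (𝓞 L), P.IsMaximal ∧ (p : 𝓞 L) ∈ P := by
  have hne : Ideal.span {(p : 𝓞 L)} ≠ ⊤ := by
    intro h
    rw [Ideal.span_singleton_eq_top] at h
    obtain ⟨y, hy⟩ := h.exists_right_inv
    have h1 := congrArg (Algebra.norm ℤ) hy
    rw [map_mul, map_one] at h1
    have h2 : Algebra.norm ℤ (p : 𝓞 L) = (p : ℤ) ^ (Module.finrank ℤ (𝓞 L)) := by
      have := Algebra.norm_algebraMap (S := 𝓞 L) (p : ℤ)
      simpa using this
    rw [h2] at h1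
    have h3 : IsUnit ((p : ℤ) ^ (Module.finrank ℤ (𝓞 L))) := IsUnit.of_mul_eq_one _ h1
    have h4 : 0 < Module.finrank ℤ (𝓞 L) := Module.finrank_pos
    rw [isUnit_pow_iff h4.ne'] at h3
    exact (Nat.prime_iff_prime_int.1 hp).not_isUnit h3
  obtain ⟨P, hP, hle⟩ := Ideal.exists_le_maximal _ hne
  exact ⟨P, hP, hle (Ideal.subset_span rfl)⟩

theorem integral_aux {n : ℕ} {K : Type*} [Field K] (M : Matrix (Fin n) (Fin n) ℤ)
    (u : Fin n → K) (hu : u ≠ 0) (y : K) (h : M.map (Int.cast : ℤ → K) *ᵥ u = y • u) :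
    IsIntegral ℤ y := by
  refine ⟨M.charpoly, M.charpoly_monic, ?_⟩
  have h1 : (Matrix.scalar (Fin n) y - M.map (Int.cast : ℤ → K)).det = 0 := by
    apply Matrix.exists_mulVec_eq_zero_iff.1
    refine ⟨u, hu, ?_⟩
    rw [Matrix.sub_mulVec, h]
    ext i
    simp [Matrix.scalar_apply, Matrix.mulVec_diagonal]
  rw [← Matrix.eval_charpoly] at h1
  rw [← Polynomial.eval_map]
  rw [← h1]
  congr 1
  exact (Matrix.charpoly_map M (Int.castRingHom K)).symm

open NumberField in
theorem core_aux (n : ℕ) (A : Matrix (Fin n) (Fin n) ℤ) (hA : A.det ≠ 0)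
    (hirr : Irreducible (A.charpoly.map (Int.castRingHom ℚ)))
    (hcop : ∃ p : ℕ, p.Prime ∧ Nat.gcd n (tp A p) = 1)
    (K : Type) [Field K] [NumberField K] (lam : 𝓞 K)
    (hroot : Polynomial.aeval (lam : K) (A.charpoly.map (Int.castRingHom ℚ)) = 0)
    (hgenK : Algebra.adjoin ℚ ({(lam : K)} : Set K) = ⊤)
    (u : Fin n → 𝓞 K) (hu : u ≠ 0)
    (hAu : (A.map (Int.cast : ℤ → K)) *ᵥ (fun i => (u i : K)) = (lam : K) • fun i => (u i : K))
    (T : Matrix (Fin n) (Fin n) ℚ) (hT : ∀ v ∈ GA A, T *ᵥ v ∈ GA A)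
    (L : Type) [Field L] [NumberField L] [Normal ℚ L] (ι : K →ₐ[ℚ] L) :
    ∃ x : K, (T.map (algebraMap ℚ K)) *ᵥ (fun i => (u i : K)) = x • fun i => (u i : K) := by
  classical
  obtain ⟨p, hp, hgcd⟩ := hcop
  obtain ⟨P, hP, hpP⟩ := exists_maximal_aux p hp L
  -- left eigenvector
  obtain ⟨w, hw0, hw⟩ : ∃ w : Fin n → 𝓞 K, w ≠ 0 ∧
      (fun i => (w i : K)) ᵥ* (A.map (Int.cast : ℤ → K)) = (lam : K) • fun i => (w i : K) := by
    have hdet : (Matrix.scalar (Fin n) (lam : K) - A.map (Int.cast : ℤ → K)).det = 0 := by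
      apply Matrix.exists_mulVec_eq_zero_iff.1
      refine ⟨fun i => (u i : K), ?_, ?_⟩
      · intro h
        apply hu
        ext i
        simpa using congrFun h i
      · rw [Matrix.sub_mulVec, hAu]
        ext i
        simp [Matrix.scalar_apply, Matrix.mulVec_diagonal]
    obtain ⟨y, hy0, hy⟩ := Matrix.exists_vecMul_eq_zero_iff.2 hdet
    obtain ⟨b, hb⟩ := IsLocalization.exist_integer_multiples_of_finite
      (nonZeroDivisors (𝓞 K)) y
    choose w hw using hb
    have hb0 : ((b : 𝓞 K) : K) ≠ 0 := by
      have := nonZeroDivisors.ne_zero b.2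
      exact_mod_cast this
    have hwy : (fun i => (w i : K)) = ((b : 𝓞 K) : K) • y := by
      ext i
      have := hw i
      rw [Algebra.smul_def] at this
      exact this
    refine ⟨w, ?_, ?_⟩
    · intro h
      apply hy0
      have h2 : ((b : 𝓞 K) : K) • y = 0 := by
        rw [← hwy, h]; ext i; simp
      exact (smul_eq_zero.1 h2).resolve_left hb0
    · rw [hwy, Matrix.smul_vecMul]
      have : y ᵥ* A.map (Int.cast : ℤ → K) = (lam : K) • y := by
        rw [Matrix.vecMul_sub, sub_eq_zero] at hy
        rw [← hy]
        ext i
        simp [Matrix.scalar_apply, Matrix.vecMul_diagonal, mul_comm]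
      rw [this, smul_comm]
  have hmin : A.charpoly.map (Int.castRingHom ℚ) = minpoly ℚ (lam : K) :=
    minpoly.eq_of_irreducible_of_monic hirr hroot (A.charpoly_monic.map _)
  have hdeg : (A.charpoly.map (Int.castRingHom ℚ)).natDegree = n := by
    rw [A.charpoly_monic.natDegree_map, Matrix.charpoly_natDegree_eq_dim, Fintype.card_fin]
  have hfin : Module.finrank ℚ K = n := by
    have hK : IntermediateField.adjoin ℚ ({(lam : K)} : Set K) = ⊤ := by
      rw [eq_top_iff]
      intro x _
      apply IntermediateField.algebra_adjoin_le_adjoin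
      rw [hgenK]; exact Algebra.mem_top
    have h1 := IntermediateField.adjoin.finrank (K := ℚ)
      (Algebra.IsIntegral.isIntegral (R := ℚ) (lam : K))
    rw [hK, IntermediateField.finrank_top', ← hmin, hdeg] at h1
    exact h1
  have hcard : Fintype.card (K →ₐ[ℚ] L) = n := by
    rw [← hfin]
    apply AlgHom.card_of_splits
    intro x
    have := Normal.splits (F := ℚ) (K := L) inferInstance (ι x)
    rwa [minpoly.algHom_eq ι ι.injective] at this
  let I : (K →ₐ[ℚ] L) → 𝓞 K →+* 𝓞 L := fun σ => RingOfIntegers.mapRingHom σ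
  have hI : ∀ σ x, ((I σ x : 𝓞 L) : L) = σ (x : K) := fun σ x => rfl
  have hzinj : Function.Injective fun σ : K →ₐ[ℚ] L => σ (lam : K) := by
    intro σ τ h
    apply AlgHom.ext_of_adjoin_eq_top hgenK
    intro x hx
    rw [Set.mem_singleton_iff.1 hx]; exact h
  -- factorization
  have hfac : A.charpoly.map (Int.castRingHom (𝓞 L)) = ∏ σ, (X - C (I σ lam)) := by
    apply Polynomial.map_injective (algebraMap (𝓞 L) L) RingOfIntegers.coe_injective
    rw [Polynomial.map_map, Polynomial.map_prod]
    have e1 : ∀ σ, (X - C (I σ lam)).map (algebraMap (𝓞 L) L) = X - C (σ (lam : K)) := by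
      intro σ; simp [← hI]
    simp only [e1]
    symm
    have e2 : A.charpoly.map ((algebraMap (𝓞 L) L).comp (Int.castRingHom (𝓞 L))) =
        (A.charpoly.map (Int.castRingHom ℚ)).map (algebraMap ℚ L) := by
      rw [Polynomial.map_map]; congr 1; exact RingHom.ext_int _ _
    rw [e2]
    symm
    apply Polynomial.eq_of_monic_of_dvd_of_natDegree_le
    · exact Polynomial.monic_prod_of_monic _ _ fun σ _ => Polynomial.monic_X_sub_C _
    · exact (A.charpoly_monic.map _).map _
    · apply Finset.prod_dvd_of_coprime
      · intro σ _ τ _ hne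
        exact Polynomial.isCoprime_X_sub_C_of_isUnit_sub
          (isUnit_iff_ne_zero.2 (sub_ne_zero.2 fun h => hne (hzinj h)))
      · intro σ _
        rw [Polynomial.dvd_iff_isRoot, Polynomial.IsRoot.def, Polynomial.eval_map_algebraMap,
          Polynomial.aeval_algHom_apply, hroot, map_zero]
    · rw [Polynomial.natDegree_prod_of_monic _ _ fun σ _ => Polynomial.monic_X_sub_C _]
      simp [hcard, A.charpoly_monic.natDegree_map]
  let S : Finset (K →ₐ[ℚ] L) := Finset.univ.filter fun σ => I σ lam ∈ P
  have hS : ∀ σ, σ ∈ S ↔ I σ lam ∈ P := by intro σ; simp [S]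
  have htp : tp A p = S.card := tp_aux A p hp L P hpP (fun σ => I σ lam) hfac S hS
  -- pairing
  let W : (K →ₐ[ℚ] L) → Fin n → L := fun σ i => (I σ (w i) : L)
  let U : (K →ₐ[ℚ] L) → Fin n → L := fun σ i => (I σ (u i) : L)
  let TL : Matrix (Fin n) (Fin n) L := T.map (algebraMap ℚ L)
  let c : (K →ₐ[ℚ] L) → (K →ₐ[ℚ] L) → L := fun σ τ => W σ ⬝ᵥ (TL *ᵥ U τ)
  have hW : ∀ σ, W σ ᵥ* (A.map (Int.cast : ℤ → L)) = (I σ lam : L) • W σ := by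
    intro σ
    ext i
    have := congrArg σ (congrFun hw i)
    simpa [Matrix.vecMul, dotProduct, W, hI] using this
  have hU : ∀ σ, (A.map (Int.cast : ℤ → L)) *ᵥ U σ = (I σ lam : L) • U σ := by
    intro σ
    ext i
    have := congrArg σ (congrFun hAu i)
    simpa [Matrix.mulVec, dotProduct, U, hI] using this
  have hW0 : ∀ σ, W σ ≠ 0 := by
    intro σ h
    apply hw0
    ext i
    have := congrFun h i
    simpa [W, hI] using this
  have hU0 : ∀ σ, U σ ≠ 0 := by
    intro σ h
    apply hu
    ext i
    have := congrFun h i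
    simpa [U, hI] using this
  have hc1 : ∀ σ τ, σ ∉ S → τ ∈ S → c σ τ = 0 := by
    intro σ τ hσ hτ
    exact key_aux A hA T hT L P (I σ lam) (I τ lam) (fun i => I σ (w i)) (fun i => I τ (u i))
      (hW σ) (hU τ) (fun h => hσ ((hS σ).2 h)) ((hS τ).1 hτ)
  have hc2 : ∀ (g : L ≃ₐ[ℚ] L) σ τ, c (g.toAlgHom.comp σ) (g.toAlgHom.comp τ) = g (c σ τ) := by
    intro g σ τ
    simp [c, W, U, TL, hI, dotProduct, Matrix.mulVec]
  have hc3 : ∀ σ τ, σ ≠ τ → c σ τ = 0 := by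
    intro σ τ hne
    by_contra hc0
    apply hne
    refine comb_aux (G := L ≃ₐ[ℚ] L) (fun g σ => g.toAlgHom.comp σ) ?_ ?_ ?_ S ?_ σ τ ?_
    · intro x; ext y; simp
    · intro g h x; ext y; simp
    · intro y x
      have h1 : Polynomial.aeval (y (lam : K)) (minpoly ℚ (x (lam : K))) = 0 := by
        rw [minpoly.algHom_eq x x.injective, Polynomial.aeval_algHom_apply, minpoly.aeval, map_zero]
      obtain ⟨g, hg⟩ := minpoly.exists_algEquiv_of_root
        (Algebra.IsAlgebraic.isAlgebraic (R := ℚ) (x (lam : K))) h1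
      exact ⟨g, hzinj hg⟩
    · rw [hcard, ← htp, hgcd]
    · intro g hg
      by_contra hg'
      have := hc1 _ _ hg' hg
      rw [hc2] at this
      exact hc0 (by simpa using this)
  -- conclusion in L
  have hperp : ∀ σ τ, σ ≠ τ → W σ ⬝ᵥ U τ = 0 := by
    intro σ τ hne
    have h1 : W σ ᵥ* (A.map (Int.cast : ℤ → L)) ⬝ᵥ U τ =
      W σ ⬝ᵥ (A.map (Int.cast : ℤ → L)) *ᵥ U τ := (Matrix.dotProduct_mulVec _ _ _).symm
    rw [hW, hU, smul_dotProduct, dotProduct_smul, smul_eq_mul, smul_eq_mul,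
      ← sub_eq_zero, ← sub_mul] at h1
    refine (mul_eq_zero.1 h1).resolve_left ?_
    exact sub_ne_zero.2 fun h => hne (hzinj h)
  have hspan := span_aux (A.map (Int.cast : ℤ → L)) hcard (fun σ : K →ₐ[ℚ] L => (I σ lam : L))
    hzinj W hW0 hW
  have hb : W ι ⬝ᵥ U ι ≠ 0 := by
    intro h
    apply hU0 ι
    apply hspan
    intro σ
    by_cases hσ : σ = ι
    · rw [hσ, h]
    · exact hperp _ _ hσ
  have hL : TL *ᵥ U ι = (c ι ι / (W ι ⬝ᵥ U ι)) • U ι := by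
    rw [← sub_eq_zero]
    apply hspan
    intro σ
    rw [dotProduct_sub, dotProduct_smul]
    by_cases hσ : σ = ι
    · rw [hσ, smul_eq_mul, div_mul_cancel₀ _ hb]; exact sub_self _
    · rw [hperp _ _ hσ, smul_zero, sub_zero]; exact hc3 _ _ hσ
  obtain ⟨i, hi⟩ : ∃ i, u i ≠ 0 := Function.ne_iff.1 hu
  have hi' : (u i : K) ≠ 0 := by exact_mod_cast hi
  set v := (T.map (algebraMap ℚ K)) *ᵥ (fun i => (u i : K)) with hv
  have hTι : ∀ j, ι (v j) = (c ι ι / (W ι ⬝ᵥ U ι)) * ι (u j : K) := by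
    intro j
    have := congrFun hL j
    rw [Pi.smul_apply, smul_eq_mul] at this
    rw [← hI, ← show U ι j = (I ι (u j) : L) from rfl, ← this, hv]
    simp [Matrix.mulVec, dotProduct, TL, U, hI]
  refine ⟨v i / (u i : K), ?_⟩
  ext j
  rw [Pi.smul_apply, smul_eq_mul]
  refine (RingHom.injective (ι : K →+* L)) ?_
  change ι _ = ι _
  have h3 : ι (u i : K) ≠ 0 := by simpa using hi'
  rw [map_mul, map_div₀, hTι, hTι, mul_div_cancel_right₀ _ h3]

/-- any `T ∈ End(G_A)` acts on an eigenvector `u` of `A` (for the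
eigenvalue `λ`) as multiplication by some `x ∈ K` with `λ^k x` integral for some `k`. -/
theorem stmt8 (n : ℕ) (A : Matrix (Fin n) (Fin n) ℤ) (hA : A.det ≠ 0)
    (hirr : Irreducible (A.charpoly.map (Int.castRingHom ℚ)))
    (hP' : (Pbad A).Nonempty)
    (hcop : ∃ p : ℕ, p.Prime ∧ Nat.gcd n (tp A p) = 1)
    (K : Type) [Field K] [NumberField K] (lam : K)
    (hint : IsIntegral ℤ lam)
    (hroot : Polynomial.aeval lam (A.charpoly.map (Int.castRingHom ℚ)) = 0)
    (hgenK : Algebra.adjoin ℚ ({lam} : Set K) = ⊤)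
    (u : Fin n → K) (hu : u ≠ 0)
    (hAu : (A.map (Int.cast : ℤ → K)) *ᵥ u = lam • u)
    (T : Matrix (Fin n) (Fin n) ℚ) (hT : ∀ v ∈ GA A, T *ᵥ v ∈ GA A) :
    ∃ x : K, (∃ k : ℕ, IsIntegral ℤ (lam ^ k * x)) ∧
      (T.map (Rat.cast : ℚ → K)) *ᵥ u = x • u := by
  obtain ⟨b, hb⟩ := IsLocalization.exist_integer_multiples_of_finite
      (nonZeroDivisors (NumberField.RingOfIntegers K)) u
  choose u' hu' using hb
  have hb0 : ((b : NumberField.RingOfIntegers K) : K) ≠ 0 := by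
    have := nonZeroDivisors.ne_zero b.2
    exact_mod_cast this
  have huu : (fun i => (u' i : K)) = ((b : NumberField.RingOfIntegers K) : K) • u := by
    ext i
    have := hu' i
    rw [Algebra.smul_def] at this
    exact this
  have hu'0 : u' ≠ 0 := by
    intro h
    apply hu
    have h2 : ((b : NumberField.RingOfIntegers K) : K) • u = 0 := by
      rw [← huu, h]; ext i; simp
    exact (smul_eq_zero.1 h2).resolve_left hb0
  let lam' : NumberField.RingOfIntegers K := ⟨lam, hint⟩
  let L := IntermediateField.normalClosure ℚ K (AlgebraicClosure K)
  have : NumberField L := { to_charZero := inferInstance, to_finiteDimensional := inferInstance }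
  have : Normal ℚ (AlgebraicClosure K) := by
    have : Algebra.IsAlgebraic ℚ (AlgebraicClosure K) := Algebra.IsAlgebraic.trans ℚ K _
    exact normal_iff.2 fun x => ⟨Algebra.IsIntegral.isIntegral x, IsAlgClosed.splits _⟩
  have hnorm := normalClosure.normal ℚ K (AlgebraicClosure K)
  have hnorm' : @Normal ℚ L _ _ DivisionRing.toRatAlgebra := by
    convert hnorm
    exact Subsingleton.elim _ _
  obtain ⟨x, hx⟩ := core_aux n A hA hirr hcop K lam' hroot hgenK u' hu'0
    (by rw [huu, Matrix.mulVec_smul, hAu, smul_comm]; rfl) T hT L (algebraMap K L).toRatAlgHom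
  have hTm : T.map (Rat.cast : ℚ → K) = T.map (algebraMap ℚ K) := by
    ext i j; simp
  have hxu : T.map (algebraMap ℚ K) *ᵥ u = x • u := by
    rw [huu, Matrix.mulVec_smul, smul_comm] at hx
    exact smul_right_injective _ hb0 hx
  refine ⟨x, ?_, hTm ▸ hxu⟩
  obtain ⟨k, M, hM⟩ := int_aux A hA T hT 0
  refine ⟨k, integral_aux M u hu _ ?_⟩
  have hM' := congrArg (fun N => (algebraMap ℚ K).mapMatrix N) hM
  simp only [map_mul, map_pow, pow_zero, mul_one] at hM'
  have e1 : (algebraMap ℚ K).mapMatrix (Aq A) = A.map (Int.cast : ℤ → K) := by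
    ext i j; simp [Aq]
  have e2 : (algebraMap ℚ K).mapMatrix (M.map (Int.cast : ℤ → ℚ)) =
      M.map (Int.cast : ℤ → K) := by
    ext i j; simp
  rw [e1, e2] at hM'
  rw [← hM', ← Matrix.mulVec_mulVec, RingHom.mapMatrix_apply, hxu, Matrix.mulVec_smul,
    pow_mulVec_aux _ _ _ hAu, smul_smul, mul_comm]
end
end

section
/- Let A ∈ M_n(ℤ) be non-singular with h_A irreducible over ℚ and P'(A) ≠ ∅, and assume there exists a prime p with gcd(n, t_p) = 1. Let K be a number field with ring of integers O_K and λ ∈ O_K a root of h_A with K = ℚ(λ). Then: (a) the subring End(G_A) = {T ∈ M_n(ℚ) : T(G_A) ⊆ G_A} of M_n(ℚ) is a finitely generated module over its subring ℤ[A, A⁻¹] (the subring of M_n(ℚ) generated by A and A⁻¹); and (b) if O_K = ℤ[λ] (i.e., every element of O_K is an integer polynomial in λ), then End(G_A) = ℤ[A, A⁻¹]. -/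
open Matrix Polynomial

noncomputable section

open Module
universe u

/-- `k G` as a subgroup. -/
abbrev mulG {V : Type*} [AddCommGroup V] (k : ℕ) (G : AddSubgroup V) : AddSubgroup V :=
  G.map (nsmulAddMonoidHom k)

lemma inj_nsmul {V : Type*} [AddCommGroup V] [Module ℚ V] {k : ℕ} (hk : k ≠ 0) :
    Function.Injective (nsmulAddMonoidHom k : V →+ V) := by
  have : IsAddTorsionFree V := IsAddTorsionFree.of_module_rat V
  exact nsmul_right_injective hk

lemma relIndex_mulG_eq {V : Type*} [AddCommGroup V] [Module ℚ V] {G G' : AddSubgroup V}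
    (hle : G ≤ G') {N : ℕ} (hN : N ≠ 0) (hNG : mulG N G' ≤ G)
    (hfin : (mulG N G).relIndex G ≠ 0) {p : ℕ} (hp : p ≠ 0) :
    (mulG p G').relIndex G' = (mulG p G).relIndex G := by
  have hc : G.relIndex G' ≠ 0 := by
    rw [← AddSubgroup.relIndex_map_map_of_injective G G' (inj_nsmul (V := V) hN)]
    intro h
    apply hfin
    have := AddSubgroup.relIndex_mul_relIndex (mulG N G) (mulG N G') G
      (AddSubgroup.map_mono hle) hNG
    rw [← this, h, zero_mul]
  have h1 := AddSubgroup.relIndex_mul_relIndex (mulG p G) G G'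
    (by rintro _ ⟨x, hx, rfl⟩; exact G.nsmul_mem hx p) hle
  have h2 := AddSubgroup.relIndex_mul_relIndex (mulG p G) (mulG p G') G'
    (AddSubgroup.map_mono hle) (by rintro _ ⟨x, hx, rfl⟩; exact G'.nsmul_mem hx p)
  rw [AddSubgroup.relIndex_map_map_of_injective G G' (inj_nsmul (V := V) hp)] at h2
  rw [← h1, mul_comm] at h2
  exact Nat.eq_of_mul_eq_mul_right (Nat.pos_of_ne_zero hc) (by rw [mul_comm]; linarith)

lemma dvd_of_units {V D : Type*} [AddCommGroup V] [Module ℚ V] [DivisionRing D] [Module D V]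
    {m : ℕ} (b : Basis (Fin m) D V) (G : AddSubgroup V) {N : ℕ} (hN : N ≠ 0)
    (hNG : ∀ i j, ∀ g ∈ G, N • (b.repr g j • b i) ∈ G)
    (hfin : (mulG N G).relIndex G ≠ 0) {p r : ℕ} (hp : p.Prime)
    (hr : (mulG p G).relIndex G = p ^ r) : m ∣ r := by
  let H : AddSubgroup D := ⨆ j, G.map ((b.coord j).toAddMonoidHom)
  let f : (Fin m → H) →+ V :=
    { toFun := fun x => ∑ i, (x i : D) • b i
      map_zero' := by simp
      map_add' := by intro x y; simp [add_smul, Finset.sum_add_distrib] }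
  have hf : Function.Injective f := by
    intro x y hxy
    have hxy : ∑ i, (x i : D) • b i = ∑ i, (y i : D) • b i := hxy
    ext i
    have := congrArg (fun v => b.repr v i) hxy
    simpa [Finsupp.single_apply] using this
  have hle : G ≤ f.range := by
    intro g hg
    refine ⟨fun j => ⟨b.repr g j, ?_⟩, b.sum_repr g⟩
    exact AddSubgroup.mem_iSup_of_mem j ⟨g, hg, rfl⟩
  have key : ∀ i, ∀ h ∈ H, N • (h • b i) ∈ G := by
    intro i h hh
    induction hh using AddSubgroup.iSup_induction' with
    | hp j x hx =>
      obtain ⟨g, hg, rfl⟩ := hx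
      exact hNG i j g hg
    | h1 => simp
    | hadd x y _ _ hx hy => rw [add_smul, smul_add]; exact G.add_mem hx hy
  have hNG' : mulG N f.range ≤ G := by
    rintro _ ⟨_, ⟨x, rfl⟩, rfl⟩
    change N • (∑ i, (x i : D) • b i) ∈ G
    rw [Finset.smul_sum]
    exact G.sum_mem fun i _ => key i _ (x i).2
  have e1 := relIndex_mulG_eq hle hN hNG' hfin hp.ne_zero
  let Q : AddSubgroup H := (nsmulAddMonoidHom p : H →+ H).range
  have e2 : mulG p f.range = (AddSubgroup.pi Set.univ (fun _ : Fin m => Q)).map f := by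
    ext v
    constructor
    · rintro ⟨_, ⟨x, rfl⟩, rfl⟩
      refine ⟨p • x, ?_, by simp⟩
      intro i _
      exact ⟨x i, rfl⟩
    · rintro ⟨x, hx, rfl⟩
      choose y hy using fun i => hx i trivial
      refine ⟨f y, ⟨y, rfl⟩, ?_⟩
      change p • f y = _
      rw [← map_nsmul]
      congr 1
      ext i
      exact congrArg _ (hy i)
  have e3 : (mulG p f.range).relIndex f.range = Q.index ^ m := by
    rw [e2, AddMonoidHom.range_eq_map, AddSubgroup.relIndex_map_map_of_injective _ _ hf,
      AddSubgroup.relIndex_top_right, AddSubgroup.index_pi]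
    simp
  rw [e1, hr] at e3
  rcases Nat.eq_zero_or_pos m with rfl | hm
  · rw [pow_zero, Nat.pow_eq_one] at e3
    rcases e3 with h | h
    · exact absurd h hp.one_lt.ne'
    · simp [h]
  · have : Q.index ∣ p ^ r := by rw [e3]; exact dvd_pow_self _ hm.ne'
    obtain ⟨a, _, ha⟩ := (Nat.dvd_prime_pow hp).1 this
    rw [ha, ← pow_mul] at e3
    have := Nat.pow_right_injective hp.two_le e3
    exact ⟨a, by rw [this, mul_comm]⟩
lemma simple_struct {V : Type u} [AddCommGroup V] [Module ℚ V] [Module.Finite ℚ V]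
    (R : Subalgebra ℚ (End ℚ V)) [IsSimpleModule R V] (a : R)
    (hcomm : ∀ d d' : V →+ V, (∀ v, d (a.1 v) = a.1 (d v)) → (∀ v, d' (a.1 v) = a.1 (d' v)) →
      ∀ v, d (d' v) = d' (d v)) :
    ∃ (m : ℕ) (D : Type u) (_ : DivisionRing D) (_ : Module D V) (b : Basis (Fin m) D V),
      m ∣ finrank ℚ V ∧
      (∀ i j, ∃ e ∈ R, ∀ v, e v = b.repr v j • b i) ∧
      (m = 1 → ∀ T ∈ R, T * a.1 = a.1 * T) := by
  classical
  let _ : DivisionRing (End R V) := Module.End.instDivisionRing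
  have : IsScalarTower ℚ (End R V) V := ⟨fun q d v => rfl⟩
  have hfin : Module.Finite (End R V) V := Module.Finite.of_restrictScalars_finite ℚ (End R V) V
  let b := Module.finBasis (End R V) V
  refine ⟨_, End R V, inferInstance, inferInstance, b, ?_, ?_, ?_⟩
  · have e : V ≃ₗ[ℚ] (Fin (finrank (End R V) V) → End R V) :=
      { b.equivFun.toAddEquiv with
        map_smul' := fun q v => map_rat_smul b.equivFun.toAddEquiv q v }
    rw [e.finrank_eq]
    by_cases h : Module.Finite ℚ (End R V)
    · rw [Module.finrank_pi_fintype]; simp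
    · rcases Nat.eq_zero_or_pos (finrank (End R V) V) with h0 | h0
      · rw [Module.finrank_pi_fintype]; simp
      exfalso
      apply h
      have : Module.Finite ℚ (Fin (finrank (End R V) V) → End R V) := Module.Finite.equiv e
      exact Module.Finite.of_surjective
        (LinearMap.proj (R := ℚ) (φ := fun _ : Fin (finrank (End R V) V) => End R V) ⟨0, h0⟩)
        (LinearMap.proj_surjective _)
  · intro i j
    let f : End (End R V) V := (b.coord j).smulRight (b i)
    obtain ⟨r, hr⟩ := Module.Finite.toModuleEnd_moduleEnd_surjective (R := R) (M := V) f
    exact ⟨r.1, r.2, fun v => congrArg (fun g : End (End R V) V => g v) hr⟩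
  · intro hm T hT
    obtain ⟨v, hv, hspan⟩ := finrank_eq_one_iff'.1 hm
    obtain ⟨d, hd⟩ := hspan (a.1 v)
    have hda : ∀ w, a.1 w = d w := by
      intro w
      obtain ⟨d', rfl⟩ := hspan w
      change a.1 (d' v) = d (d' v)
      have h1 : ∀ (x : End R V) w, x (a.1 w) = a.1 (x w) := fun x w => x.map_smul a w
      rw [← h1, ← hd]
      exact hcomm d'.toAddMonoidHom d.toAddMonoidHom (h1 d') (h1 d) v
    ext w
    change T (a.1 w) = a.1 (T w)
    rw [hda, hda]
    exact (d.map_smul (⟨T, hT⟩ : R) w).symm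
/-- The operators that preserve `G` up to a nonzero multiple. -/
def quasiEnd {V : Type u} [AddCommGroup V] [Module ℚ V] (G : AddSubgroup V) :
    Subalgebra ℚ (End ℚ V) where
  carrier := {f | ∃ N : ℕ, N ≠ 0 ∧ ∀ g ∈ G, N • f g ∈ G}
  mul_mem' := by
    rintro f f' ⟨N, hN, h⟩ ⟨N', hN', h'⟩
    refine ⟨N * N', mul_ne_zero hN hN', fun g hg => ?_⟩
    have := h _ (h' g hg)
    rwa [map_nsmul, smul_smul] at this
  add_mem' := by
    rintro f f' ⟨N, hN, h⟩ ⟨N', hN', h'⟩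
    refine ⟨N * N', mul_ne_zero hN hN', fun g hg => ?_⟩
    rw [LinearMap.add_apply, smul_add]
    refine G.add_mem ?_ ?_
    · rw [mul_comm, mul_smul]; exact G.nsmul_mem (h g hg) _
    · rw [mul_smul]; exact G.nsmul_mem (h' g hg) _
  algebraMap_mem' := by
    intro q
    refine ⟨q.den, q.den_nz, fun g hg => ?_⟩
    have : q.den • (algebraMap ℚ (End ℚ V) q) g = q.num • g := by
      rw [Module.algebraMap_end_apply, ← Nat.cast_smul_eq_nsmul ℚ, smul_smul, mul_comm,
        Rat.mul_den_eq_num, Int.cast_smul_eq_zsmul]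
    rw [this]
    exact G.zsmul_mem hg _

lemma poly_commute {V : Type u} [AddCommGroup V] [Module ℚ V] (a : End ℚ V) (d : V →+ V)
    (hd : ∀ v, d (a v) = a (d v)) (q : ℚ[X]) (v : V) :
    d (aeval a q v) = aeval a q (d v) := by
  let d' : End ℚ V := d.toRatLinearMap
  have : Commute d' a := by ext v; exact hd v
  have h2 : Commute d' (aeval a q) := by
    induction q using Polynomial.induction_on' with
    | add p q hp hq => rw [map_add]; exact hp.add_right hq
    | monomial n c =>
      rw [aeval_monomial]
      exact Commute.mul_right (Algebra.commutes c d').symm (this.pow_right n)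
  exact congrArg (fun f : End ℚ V => f v) h2

lemma commute_of_coprime {V : Type u} [AddCommGroup V] [Module ℚ V] [Module.Finite ℚ V]
    [Nontrivial V] (G : AddSubgroup V) (a : End ℚ V) (haG : ∀ g ∈ G, a g ∈ G)
    (hcyc : ∀ v : V, v ≠ 0 → ∀ w, ∃ q : ℚ[X], aeval a q v = w)
    (hfin : ∀ N : ℕ, N ≠ 0 → (mulG N G).relIndex G ≠ 0) {p r : ℕ} (hp : p.Prime)
    (hr : (mulG p G).relIndex G = p ^ r) (hcop : Nat.gcd (finrank ℚ V) r = 1)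
    (T : End ℚ V) (hT : ∀ g ∈ G, T g ∈ G) : T * a = a * T := by
  have haR : a ∈ quasiEnd G := ⟨1, one_ne_zero, by simpa using haG⟩
  have hTR : T ∈ quasiEnd G := ⟨1, one_ne_zero, by simpa using hT⟩
  have : IsSimpleModule (quasiEnd G) V := by
    rw [isSimpleModule_iff_toSpanSingleton_surjective]
    refine ⟨inferInstance, fun v hv w => ?_⟩
    obtain ⟨q, hq⟩ := hcyc v hv w
    refine ⟨⟨aeval a q, ?_⟩, hq⟩
    exact Algebra.adjoin_le (by simpa using haR) (aeval_mem_adjoin_singleton ℚ a)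
  obtain ⟨m, D, _, _, b, hmn, hunit, hfinal⟩ := simple_struct (quasiEnd G) ⟨a, haR⟩ (by
    intro d d' hd hd' v
    by_cases hv : v = 0
    · simp [hv]
    obtain ⟨q, hq⟩ := hcyc v hv (d v)
    rw [← hq, poly_commute a d' hd']
    obtain ⟨q', hq'⟩ := hcyc v hv (d' v)
    rw [← hq', poly_commute a d hd, ← hq, ← Module.End.mul_apply, ← Module.End.mul_apply,
      ← map_mul, ← map_mul, mul_comm])
  choose e heR he using hunit
  choose N hN hNe using heR
  let M := ∏ i, ∏ j, N i j
  have hM : M ≠ 0 := Finset.prod_ne_zero_iff.2 fun i _ => Finset.prod_ne_zero_iff.2 fun j _ => hN i j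
  have hmr : m ∣ r := by
    refine dvd_of_units b G hM ?_ (hfin M hM) hp hr
    intro i j g hg
    have hd : N i j ∣ M := (Finset.dvd_prod_of_mem (fun j => N i j) (Finset.mem_univ j)).trans
      (Finset.dvd_prod_of_mem (fun i => ∏ j, N i j) (Finset.mem_univ i))
    obtain ⟨c, hc⟩ := hd
    rw [← he, hc, mul_comm, mul_smul]
    exact G.nsmul_mem (hNe i j g hg) c
  exact hfinal (Nat.dvd_one.1 (hcop ▸ Nat.dvd_gcd hmn hmr)) T hTR

section lattice

variable {n : ℕ}

/-- The inclusion `ℤ^n → ℚ^n`. -/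
def iotaQ (n : ℕ) : (Fin n → ℤ) →+ (Fin n → ℚ) := (Int.castAddHom ℚ).compLeft (Fin n)

/-- The reduction `ℤ^n → (ℤ/N)^n`. -/
def redN (N n : ℕ) : (Fin n → ℤ) →+ (Fin n → ZMod N) := (Int.castAddHom (ZMod N)).compLeft (Fin n)

lemma iotaQ_inj : Function.Injective (iotaQ n) := by
  intro x y h
  ext i
  have : (x i : ℚ) = y i := congrFun h i
  exact_mod_cast this

lemma redN_surj (N : ℕ) : Function.Surjective (redN N n) := by
  intro y
  choose x hx using fun i => ZMod.intCast_surjective (y i)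
  exact ⟨x, funext hx⟩

lemma redN_eq_zero {N : ℕ} {x : Fin n → ℤ} : redN N n x = 0 ↔ ∃ y, x = N • y := by
  constructor
  · intro h
    have : ∀ i, ∃ c, x i = N * c := fun i =>
      (ZMod.intCast_zmod_eq_zero_iff_dvd (x i) N).1 (congrFun h i)
    choose y hy using this
    exact ⟨y, by ext i; simp [hy]⟩
  · rintro ⟨y, rfl⟩
    ext i
    simp [redN]

lemma iotaQ_mulVec (A : Matrix (Fin n) (Fin n) ℤ) (x : Fin n → ℤ) :
    iotaQ n (A *ᵥ x) = Aq A *ᵥ iotaQ n x := by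
  ext i
  simp [iotaQ, Aq, mulVec, dotProduct]

lemma redN_mulVec (N : ℕ) (A : Matrix (Fin n) (Fin n) ℤ) (x : Fin n → ℤ) :
    redN N n (A *ᵥ x) = A.map (Int.castRingHom (ZMod N)) *ᵥ redN N n x := by
  ext i
  simp [redN, mulVec, dotProduct]

lemma iotaQ_pow (A : Matrix (Fin n) (Fin n) ℤ) (k : ℕ) (x : Fin n → ℤ) :
    iotaQ n (A ^ k *ᵥ x) = Aq A ^ k *ᵥ iotaQ n x := by
  induction k with
  | zero => simp
  | succ k ih => rw [pow_succ', pow_succ', ← mulVec_mulVec, ← mulVec_mulVec, iotaQ_mulVec, ih]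

lemma redN_pow (N : ℕ) (A : Matrix (Fin n) (Fin n) ℤ) (k : ℕ) (x : Fin n → ℤ) :
    redN N n (A ^ k *ᵥ x) = A.map (Int.castRingHom (ZMod N)) ^ k *ᵥ redN N n x := by
  induction k with
  | zero => simp
  | succ k ih => rw [pow_succ', pow_succ', ← mulVec_mulVec, ← mulVec_mulVec, redN_mulVec, ih]

/-- `G_A` as an additive subgroup. -/
def GAgrp (A : Matrix (Fin n) (Fin n) ℤ) : AddSubgroup (Fin n → ℚ) where
  carrier := {v | ∃ (k : ℕ) (x : Fin n → ℤ), Aq A ^ k *ᵥ v = iotaQ n x}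
  zero_mem' := ⟨0, 0, by simp⟩
  add_mem' := by
    rintro v w ⟨k, x, hx⟩ ⟨l, y, hy⟩
    refine ⟨k + l, A ^ l *ᵥ x + A ^ k *ᵥ y, ?_⟩
    rw [mulVec_add, map_add, iotaQ_pow, iotaQ_pow, ← hx, ← hy, mulVec_mulVec, mulVec_mulVec,
      ← pow_add, ← pow_add, add_comm l k]
  neg_mem' := by
    rintro v ⟨k, x, hx⟩
    exact ⟨k, -x, by rw [mulVec_neg, hx, map_neg]⟩

lemma det_Aq (A : Matrix (Fin n) (Fin n) ℤ) : (Aq A).det = (A.det : ℚ) := by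
  have := (Int.castRingHom ℚ).map_det A
  simpa [Aq] using this.symm

lemma isUnit_Aq {A : Matrix (Fin n) (Fin n) ℤ} (hA : A.det ≠ 0) : IsUnit (Aq A).det := by
  rw [det_Aq, isUnit_iff_ne_zero]
  exact_mod_cast hA

lemma mem_GA {A : Matrix (Fin n) (Fin n) ℤ} (hA : A.det ≠ 0) (v : Fin n → ℚ) :
    v ∈ GA A ↔ v ∈ GAgrp A := by
  have hu := isUnit_Aq hA
  constructor
  · rintro ⟨k, x, rfl⟩
    obtain ⟨l, rfl | rfl⟩ := k.eq_nat_or_neg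
    · exact ⟨0, A ^ l *ᵥ x, by rw [iotaQ_pow]; simp [iotaQ]; rfl⟩
    · refine ⟨l, x, ?_⟩
      rw [mulVec_mulVec, ← zpow_natCast, ← Matrix.zpow_add hu]
      simp [iotaQ]; rfl
  · rintro ⟨k, x, hx⟩
    refine ⟨-k, x, ?_⟩
    change v = _ *ᵥ iotaQ n x
    rw [← hx, mulVec_mulVec, ← zpow_natCast, ← Matrix.zpow_add hu]
    simp

lemma iota_mem (A : Matrix (Fin n) (Fin n) ℤ) (x : Fin n → ℤ) : iotaQ n x ∈ GAgrp A :=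
  ⟨0, x, by simp⟩

lemma index_aux (A : Matrix (Fin n) (Fin n) ℤ) (N : ℕ) (hN : N ≠ 0) :
    (mulG N (GAgrp A)).relIndex (GAgrp A) =
      (Module.End.maxGenEigenspace (A.map (Int.castRingHom (ZMod N))).toLin' 0).toAddSubgroup.index := by
  have : NeZero N := ⟨hN⟩
  set a := (A.map (Int.castRingHom (ZMod N))).toLin' with ha
  have hNq : (N : ℚ) ≠ 0 := by exact_mod_cast hN
  have hapow : ∀ k x, redN N n (A ^ k *ᵥ x) = (a ^ k) (redN N n x) := by
    intro k x
    rw [redN_pow, ha, ← Matrix.toLin'_pow, Matrix.toLin'_apply]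
  have h1 : GAgrp A = (iotaQ n).range ⊔ mulG N (GAgrp A) := by
    apply le_antisymm
    · rintro v ⟨k, x, hx⟩
      obtain ⟨M, hM, hkM⟩ := (a.eventually_codisjoint_ker_pow_range_pow.and
        (Filter.eventually_ge_atTop k)).exists
      obtain ⟨y, z, hy, hz, hyz⟩ := Submodule.codisjoint_iff_exists_add_eq.1 hM (redN N n x)
      obtain ⟨u', rfl⟩ := hz
      obtain ⟨u, rfl⟩ := redN_surj N u'
      set w := A ^ (M - k) *ᵥ u with hw
      have hAw : A ^ k *ᵥ w = A ^ M *ᵥ u := by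
        rw [hw, mulVec_mulVec, ← pow_add, Nat.add_sub_cancel' hkM]
      have hz0 : redN N n (A ^ M *ᵥ (x - A ^ k *ᵥ w)) = 0 := by
        rw [hapow, map_sub, hAw, hapow, ← hyz, add_sub_cancel_right]
        exact hy
      obtain ⟨z, hz⟩ := redN_eq_zero.1 hz0
      have hmem : (N : ℚ)⁻¹ • (v - iotaQ n w) ∈ GAgrp A := by
        refine ⟨M + k, z, ?_⟩
        rw [mulVec_smul, pow_add, ← mulVec_mulVec, mulVec_sub, hx, ← iotaQ_pow, ← map_sub,
          ← iotaQ_pow, hz, map_nsmul, ← Nat.cast_smul_eq_nsmul ℚ, smul_smul,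
          inv_mul_cancel₀ hNq, one_smul]
      refine AddSubgroup.mem_sup.2 ⟨iotaQ n w, ⟨w, rfl⟩, v - iotaQ n w, ⟨_, hmem, ?_⟩, by simp⟩
      rw [nsmulAddMonoidHom_apply, ← Nat.cast_smul_eq_nsmul ℚ, smul_smul, mul_inv_cancel₀ hNq, one_smul]
    · refine sup_le ?_ ?_
      · rintro _ ⟨x, rfl⟩; exact iota_mem A x
      · rintro _ ⟨x, hx, rfl⟩; exact (GAgrp A).nsmul_mem hx N
  have h2 : (mulG N (GAgrp A)).comap (iotaQ n) =
      (Module.End.maxGenEigenspace a 0).toAddSubgroup.comap (redN N n) := by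
    ext x
    rw [AddSubgroup.mem_comap, AddSubgroup.mem_comap, Submodule.mem_toAddSubgroup,
      Module.End.mem_maxGenEigenspace]
    simp only [zero_smul, sub_zero, ← hapow, redN_eq_zero]
    constructor
    · rintro ⟨g, ⟨k, y, hy⟩, hg⟩
      refine ⟨k, y, iotaQ_inj ?_⟩
      rw [iotaQ_pow, ← hg, map_nsmul, ← hy]
      change _ *ᵥ (N • g) = _
      rw [mulVec_smul]
    · rintro ⟨k, y, hy⟩
      refine ⟨(N : ℚ)⁻¹ • iotaQ n x, ⟨k, y, ?_⟩, ?_⟩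
      · rw [mulVec_smul, ← iotaQ_pow, hy, map_nsmul, ← Nat.cast_smul_eq_nsmul ℚ, smul_smul,
          inv_mul_cancel₀ hNq, one_smul]
      · rw [nsmulAddMonoidHom_apply, ← Nat.cast_smul_eq_nsmul ℚ, smul_smul, mul_inv_cancel₀ hNq, one_smul]
  have h3 : (mulG N (GAgrp A)).relIndex (GAgrp A) =
      (mulG N (GAgrp A)).relIndex ((iotaQ n).range ⊔ mulG N (GAgrp A)) :=
    congrArg _ h1
  rw [h3, AddSubgroup.relIndex_sup_right, ← AddSubgroup.index_comap, h2,
    AddSubgroup.index_comap_of_surjective _ (redN_surj N)]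

lemma index_ne_zero (A : Matrix (Fin n) (Fin n) ℤ) (N : ℕ) (hN : N ≠ 0) :
    (mulG N (GAgrp A)).relIndex (GAgrp A) ≠ 0 := by
  have : NeZero N := ⟨hN⟩
  rw [index_aux A N hN]
  have hf : Finite (Fin n → ZMod N) := inferInstance
  exact AddSubgroup.index_ne_zero_of_finite (hH := Quotient.finite _)

lemma index_prime (A : Matrix (Fin n) (Fin n) ℤ) (p : ℕ) (hp : p.Prime) :
    tp A p ≤ n ∧ (mulG p (GAgrp A)).relIndex (GAgrp A) = p ^ (n - tp A p) := by
  have : Fact p.Prime := ⟨hp⟩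
  have : NeZero p := ⟨hp.ne_zero⟩
  rw [index_aux A p hp.ne_zero]
  set a := (A.map (Int.castRingHom (ZMod p))).toLin' with ha
  have ht : finrank (ZMod p) (Module.End.maxGenEigenspace a 0) = tp A p := by
    rw [LinearMap.finrank_maxGenEigenspace_zero_eq, tp, Polynomial.rootMultiplicity_eq_natTrailingDegree',
      ← Matrix.charpoly_map, ha, Matrix.charpoly_toLin']
  have h := Submodule.finrank_quotient_add_finrank (Module.End.maxGenEigenspace a 0)
  rw [ht, Module.finrank_fin_fun] at h
  refine ⟨by omega, ?_⟩
  change Nat.card ((Fin n → ZMod p) ⧸ (Module.End.maxGenEigenspace a 0)) = _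
  rw [Module.natCard_eq_pow_finrank (K := ZMod p), Nat.card_zmod]
  congr 1
  omega

end lattice

section final

variable {n : ℕ}

lemma charpoly_Aq (A : Matrix (Fin n) (Fin n) ℤ) :
    (Aq A).charpoly = A.charpoly.map (Int.castRingHom ℚ) :=
  Matrix.charpoly_map A (Int.castRingHom ℚ)

lemma cyclic_aux (B : Matrix (Fin n) (Fin n) ℚ) (hirr : Irreducible B.charpoly)
    (v : Fin n → ℚ) (hv : v ≠ 0) (w : Fin n → ℚ) :
    ∃ q : ℚ[X], aeval (toLin' B) q v = w := by
  let f : degreeLT ℚ n →ₗ[ℚ] (Fin n → ℚ) :=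
    { toFun := fun q => aeval (toLin' B) q.1 v
      map_add' := by intro x y; simp
      map_smul' := by intro c x; simp }
  have hinj : Function.Injective f := by
    rw [injective_iff_map_eq_zero]
    intro q hq
    by_contra hq0
    have hq1 : q.1 ≠ 0 := fun h => hq0 (Subtype.ext h)
    have hdeg : q.1.degree < B.charpoly.degree := by
      rw [Matrix.charpoly_degree_eq_dim, Fintype.card_fin]
      exact mem_degreeLT.1 q.2
    have hcop : IsCoprime B.charpoly q.1 := by
      rw [hirr.coprime_iff_not_dvd]
      intro hd
      exact absurd (Polynomial.degree_le_of_dvd hd hq1) (not_le.2 hdeg)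
    obtain ⟨x, y, hxy⟩ := hcop
    have h := congrArg (fun r => aeval (toLin' B) r v) hxy
    have hch : aeval (toLin' B) B.charpoly = 0 := by
      rw [← Matrix.charpoly_toLin']; exact LinearMap.aeval_self_charpoly _
    have hq : aeval (toLin' B) q.1 v = 0 := hq
    simp [hch, hq] at h
    exact hv h.symm
  have hfr : finrank ℚ (degreeLT ℚ n) = finrank ℚ (Fin n → ℚ) := (degreeLTEquiv ℚ n).finrank_eq
  have : Module.Finite ℚ (degreeLT ℚ n) := Module.Finite.equiv (degreeLTEquiv ℚ n).symm
  obtain ⟨q, hq⟩ := (LinearMap.injective_iff_surjective_of_finrank_eq_finrank hfr).1 hinj w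
  exact ⟨q.1, hq⟩

lemma Aq_mem (A : Matrix (Fin n) (Fin n) ℤ) (v : Fin n → ℚ) (hv : v ∈ GAgrp A) :
    Aq A *ᵥ v ∈ GAgrp A := by
  obtain ⟨k, x, hx⟩ := hv
  refine ⟨k, A *ᵥ x, ?_⟩
  rw [iotaQ_mulVec, ← hx, mulVec_mulVec, mulVec_mulVec, ← pow_succ, ← pow_succ']

lemma Aq_inv_mem {A : Matrix (Fin n) (Fin n) ℤ} (hA : A.det ≠ 0) (v : Fin n → ℚ)
    (hv : v ∈ GAgrp A) : (Aq A)⁻¹ *ᵥ v ∈ GAgrp A := by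
  obtain ⟨k, x, hx⟩ := hv
  refine ⟨k + 1, x, ?_⟩
  rw [← hx, mulVec_mulVec, pow_succ, mul_assoc, Matrix.mul_nonsing_inv _ (isUnit_Aq hA), mul_one]

lemma Aq_mul (A B : Matrix (Fin n) (Fin n) ℤ) : Aq (A * B) = Aq A * Aq B :=
  Matrix.map_mul (f := Int.castRingHom ℚ)

lemma Aq_inj : Function.Injective (Aq : Matrix (Fin n) (Fin n) ℤ → _) :=
  Matrix.map_injective Int.cast_injective

lemma pow_Aq (A : Matrix (Fin n) (Fin n) ℤ) (k : ℕ) : Aq (A ^ k) = Aq A ^ k :=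
  map_pow (Int.castRingHom ℚ).mapMatrix A k

lemma Aq_comm_mem {A M : Matrix (Fin n) (Fin n) ℤ} (h : M * A = A * M) (v : Fin n → ℚ)
    (hv : v ∈ GAgrp A) : Aq M *ᵥ v ∈ GAgrp A := by
  obtain ⟨k, x, hx⟩ := hv
  refine ⟨k, M *ᵥ x, ?_⟩
  have hc : Commute (Aq A ^ k) (Aq M) := by
    apply Commute.pow_left
    change Aq A * Aq M = Aq M * Aq A
    rw [← Aq_mul, ← Aq_mul, h]
  rw [iotaQ_mulVec, ← hx, mulVec_mulVec, mulVec_mulVec, hc.eq]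

lemma comm_of_mem {A : Matrix (Fin n) (Fin n) ℤ}
    (hirr : Irreducible (A.charpoly.map (Int.castRingHom ℚ)))
    (hcop : ∃ p : ℕ, p.Prime ∧ Nat.gcd n (tp A p) = 1)
    (T : Matrix (Fin n) (Fin n) ℚ) (hT : ∀ v ∈ GAgrp A, T *ᵥ v ∈ GAgrp A) :
    T * Aq A = Aq A * T := by
  obtain ⟨p, hp, hg⟩ := hcop
  rw [← charpoly_Aq] at hirr
  rcases Nat.eq_zero_or_pos n with rfl | hn
  · exact Subsingleton.elim _ _
  have : NeZero n := ⟨hn.ne'⟩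
  obtain ⟨hle, hidx⟩ := index_prime A p hp
  have h := commute_of_coprime (GAgrp A) (toLin' (Aq A))
    (fun g hg => by simpa using Aq_mem A g hg) (cyclic_aux _ hirr) (index_ne_zero A) hp hidx
    (by rw [Module.finrank_fin_fun, Nat.gcd_self_sub_right hle, hg]) (toLin' T)
    (fun g hg => by simpa using hT g hg)
  apply Matrix.toLin'.injective
  rw [Matrix.toLin'_mul, Matrix.toLin'_mul]
  exact h

lemma exists_int {A : Matrix (Fin n) (Fin n) ℤ} (hA : A.det ≠ 0)
    (T : Matrix (Fin n) (Fin n) ℚ) (hT : ∀ v ∈ GAgrp A, T *ᵥ v ∈ GAgrp A)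
    (hc : T * Aq A = Aq A * T) :
    ∃ (k : ℕ) (M : Matrix (Fin n) (Fin n) ℤ), M * A = A * M ∧ T = (Aq A)⁻¹ ^ k * Aq M := by
  choose k x hx using fun i : Fin n => hT _ (iota_mem A (Pi.single i 1))
  let m := ∑ i, k i
  have hkm : ∀ i, k i ≤ m := fun i => Finset.single_le_sum (fun _ _ => Nat.zero_le _) (Finset.mem_univ i)
  let M : Matrix (Fin n) (Fin n) ℤ := Matrix.of fun r i => (A ^ (m - k i) *ᵥ x i) r
  have hM : Aq M = Aq A ^ m * T := by
    apply Matrix.toLin'.injective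
    apply LinearMap.pi_ext'
    intro i
    ext1
    have h1 : iotaQ n (Pi.single i 1) = (Pi.single i 1 : Fin n → ℚ) := by
      ext j
      by_cases h : j = i
      · subst h; simp [iotaQ]
      · simp [iotaQ, h]
    have h2 : M *ᵥ (Pi.single i 1) = A ^ (m - k i) *ᵥ x i := by
      ext r; simp [M]
    change toLin' _ (Pi.single i 1) = toLin' _ (Pi.single i 1)
    rw [toLin'_apply, toLin'_apply, ← h1, ← iotaQ_mulVec, h2, iotaQ_pow, ← hx, mulVec_mulVec,
      mulVec_mulVec, ← pow_add, Nat.sub_add_cancel (hkm i)]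
  refine ⟨m, M, ?_, ?_⟩
  · apply Aq_inj
    rw [Aq_mul, Aq_mul, hM, mul_assoc, hc, ← mul_assoc, ← mul_assoc, ← pow_succ, ← pow_succ']
  · rw [hM, ← mul_assoc, Matrix.inv_pow',
      Matrix.nonsing_inv_mul _ (by rw [Matrix.det_pow]; exact (isUnit_Aq hA).pow m), one_mul]

lemma int_poly {A : Matrix (Fin n) (Fin n) ℤ}
    (hirr : Irreducible (A.charpoly.map (Int.castRingHom ℚ)))
    {K : Type} [Field K] [NumberField K] (lam : K)
    (hroot : Polynomial.aeval lam (A.charpoly.map (Int.castRingHom ℚ)) = 0)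
    (hO : ∀ x : K, IsIntegral ℤ x → x ∈ Algebra.adjoin ℤ ({lam} : Set K))
    (M : Matrix (Fin n) (Fin n) ℤ) (hM : M * A = A * M) :
    ∃ r : ℤ[X], Aq M = aeval (Aq A) r := by
  rcases Nat.eq_zero_or_pos n with rfl | hn
  · exact ⟨0, Subsingleton.elim _ _⟩
  have : NeZero n := ⟨hn.ne'⟩
  have hirr' := hirr
  rw [← charpoly_Aq] at hirr' hroot
  have hmB : minpoly ℚ (Aq A) = (Aq A).charpoly :=
    (minpoly.eq_of_irreducible_of_monic hirr' (Matrix.aeval_self_charpoly _)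
      (Matrix.charpoly_monic _)).symm
  have hmL : minpoly ℚ lam = (Aq A).charpoly :=
    (minpoly.eq_of_irreducible_of_monic hirr' hroot (Matrix.charpoly_monic _)).symm
  have haev : ∀ q : ℚ[X], aeval (toLin' (Aq A)) q = toLin' (aeval (Aq A) q) := by
    intro q
    exact aeval_algHom_apply (Matrix.toLinAlgEquiv' (R := ℚ) (n := Fin n)) (Aq A) q
  obtain ⟨q, hq⟩ : ∃ q : ℚ[X], Aq M = aeval (Aq A) q := by
    obtain ⟨v, hv⟩ := exists_ne (0 : Fin n → ℚ)
    obtain ⟨q, hq⟩ := cyclic_aux _ hirr' v hv (Aq M *ᵥ v)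
    refine ⟨q, ?_⟩
    apply Matrix.toLin'.injective
    rw [← haev]
    refine LinearMap.ext fun w => ?_
    obtain ⟨s, rfl⟩ := cyclic_aux _ hirr' v hv w
    have h1 := poly_commute (toLin' (Aq A)) (toLin' (Aq M)).toAddMonoidHom (by
      intro w
      change toLin' (Aq M) (toLin' (Aq A) w) = toLin' (Aq A) (toLin' (Aq M) w)
      simp only [toLin'_apply, mulVec_mulVec, ← Aq_mul, hM]) s v
    have h1 : toLin' (Aq M) (aeval (toLin' (Aq A)) s v) = aeval (toLin' (Aq A)) s (Aq M *ᵥ v) := h1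
    rw [h1, ← hq, ← Module.End.mul_apply, ← Module.End.mul_apply, ← map_mul, ← map_mul, mul_comm]
  have hint : IsIntegral ℤ (aeval lam q) := by
    refine ⟨M.charpoly, Matrix.charpoly_monic M, ?_⟩
    have h1 : aeval (Aq A) ((Aq M).charpoly.comp q) = 0 := by
      rw [aeval_comp, ← hq, Matrix.aeval_self_charpoly]
    have h2 := minpoly.dvd ℚ _ h1
    rw [hmB, ← hmL] at h2
    have h3 : aeval lam ((Aq M).charpoly.comp q) = 0 := by
      obtain ⟨c, hc⟩ := h2
      rw [hc, map_mul, minpoly.aeval, zero_mul]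
    rw [aeval_comp, charpoly_Aq, aeval_def, eval₂_map] at h3
    have h7 : algebraMap ℤ K = (algebraMap ℚ K).comp (Int.castRingHom ℚ) := RingHom.ext_int _ _
    rw [h7]
    exact h3
  obtain ⟨r, hr⟩ := Algebra.adjoin_singleton_eq_range_aeval ℤ lam ▸ hO _ hint
  refine ⟨r, ?_⟩
  have h4 : aeval lam (q - r.map (algebraMap ℤ ℚ)) = 0 := by
    rw [map_sub, aeval_map_algebraMap, sub_eq_zero]; exact hr.symm
  have h5 := minpoly.dvd ℚ _ h4
  rw [hmL, ← hmB] at h5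
  obtain ⟨c, hc⟩ := h5
  have h6 : aeval (Aq A) (q - r.map (algebraMap ℤ ℚ)) = 0 := by
    rw [hc, map_mul, minpoly.aeval, zero_mul]
  rw [map_sub, aeval_map_algebraMap, sub_eq_zero] at h6
  rw [hq, h6]

end final

/-- `End(G_A)` is a finitely generated module over `ℤ[A, A⁻¹]`, and if
`O_K = ℤ[λ]` then `End(G_A) = ℤ[A, A⁻¹]`. -/
theorem stmt10 (n : ℕ) (A : Matrix (Fin n) (Fin n) ℤ) (hA : A.det ≠ 0)
    (hirr : Irreducible (A.charpoly.map (Int.castRingHom ℚ)))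
    (hP' : (Pbad A).Nonempty)
    (hcop : ∃ p : ℕ, p.Prime ∧ Nat.gcd n (tp A p) = 1)
    (K : Type) [Field K] [NumberField K] (lam : K)
    (hint : IsIntegral ℤ lam)
    (hroot : Polynomial.aeval lam (A.charpoly.map (Int.castRingHom ℚ)) = 0)
    (hgenK : Algebra.adjoin ℚ ({lam} : Set K) = ⊤) :
    ((∃ s : Finset (Matrix (Fin n) (Fin n) ℚ),
        (↑s : Set (Matrix (Fin n) (Fin n) ℚ)) ⊆ {T | ∀ v ∈ GA A, T *ᵥ v ∈ GA A} ∧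
        ∀ T : Matrix (Fin n) (Fin n) ℚ, (∀ v ∈ GA A, T *ᵥ v ∈ GA A) →
          ∃ c : Matrix (Fin n) (Fin n) ℚ → Matrix (Fin n) (Fin n) ℚ,
            (∀ m ∈ s, c m ∈ Subring.closure ({Aq A, (Aq A)⁻¹} : Set (Matrix (Fin n) (Fin n) ℚ))) ∧
            T = ∑ m ∈ s, c m * m) ∧
      ((∀ x : K, IsIntegral ℤ x → x ∈ Algebra.adjoin ℤ ({lam} : Set K)) →
        {T : Matrix (Fin n) (Fin n) ℚ | ∀ v ∈ GA A, T *ᵥ v ∈ GA A} =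
          (Subring.closure ({Aq A, (Aq A)⁻¹} : Set (Matrix (Fin n) (Fin n) ℚ)) :
            Set (Matrix (Fin n) (Fin n) ℚ)))) := by
  have hmem : ∀ T : Matrix (Fin n) (Fin n) ℚ,
      (∀ v ∈ GA A, T *ᵥ v ∈ GA A) ↔ ∀ v ∈ GAgrp A, T *ᵥ v ∈ GAgrp A := by
    intro T
    simp only [mem_GA hA]
  have hinvS : (Aq A)⁻¹ ∈ Subring.closure ({Aq A, (Aq A)⁻¹} : Set (Matrix (Fin n) (Fin n) ℚ)) :=
    Subring.subset_closure (by simp)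
  have hAS : Aq A ∈ Subring.closure ({Aq A, (Aq A)⁻¹} : Set (Matrix (Fin n) (Fin n) ℚ)) :=
    Subring.subset_closure (by simp)
  have hdecomp : ∀ T : Matrix (Fin n) (Fin n) ℚ, (∀ v ∈ GA A, T *ᵥ v ∈ GA A) →
      ∃ (k : ℕ) (M : Matrix (Fin n) (Fin n) ℤ), M * A = A * M ∧ T = (Aq A)⁻¹ ^ k * Aq M := by
    intro T hT
    rw [hmem] at hT
    exact exists_int hA T hT (comm_of_mem hirr hcop T hT)
  refine ⟨?_, ?_⟩
  · classical
    let C : Submodule ℤ (Matrix (Fin n) (Fin n) ℤ) :=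
      { carrier := {M | M * A = A * M}
        zero_mem' := by simp
        add_mem' := by
          intro x y hx hy
          change (x + y) * A = A * (x + y)
          rw [add_mul, mul_add, hx, hy]
        smul_mem' := by
          intro c x hx
          change (c • x) * A = A * (c • x)
          rw [smul_mul_assoc, mul_smul_comm, hx] }
    obtain ⟨s, hs⟩ := IsNoetherian.noetherian C
    have hsC : ∀ M ∈ s, M * A = A * M := by
      intro M hM
      have : M ∈ C := hs ▸ Submodule.subset_span hM
      exact this
    refine ⟨s.image Aq, ?_, ?_⟩
    · intro T hT
      rw [Finset.coe_image] at hT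
      obtain ⟨M, hM, rfl⟩ := hT
      exact (hmem _).2 (Aq_comm_mem (hsC M hM))
    · intro T hT
      obtain ⟨k, M, hM, rfl⟩ := hdecomp T hT
      have hMC : M ∈ Submodule.span ℤ (s : Set (Matrix (Fin n) (Fin n) ℤ)) := by
        rw [hs]; exact hM
      obtain ⟨f, -, hf⟩ := Submodule.mem_span_finset.1 hMC
      refine ⟨fun m => f (Function.invFun Aq m) • (Aq A)⁻¹ ^ k, ?_, ?_⟩
      · intro m _
        exact Subring.zsmul_mem _ (Subring.pow_mem _ hinvS k) _
      · rw [Finset.sum_image (fun _ _ _ _ h => Aq_inj h)]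
        simp only [Function.leftInverse_invFun Aq_inj _]
        have hAqM : Aq M = ∑ a ∈ s, f a • Aq a := by
          rw [← hf]
          have := map_sum (Int.castRingHom ℚ).mapMatrix (fun a => f a • a) s
          simp only [map_zsmul] at this
          exact this
        rw [hAqM, Finset.mul_sum]
        exact Finset.sum_congr rfl fun a _ => by rw [mul_smul_comm, smul_mul_assoc]
  · intro hO
    apply Set.Subset.antisymm
    · intro T hT
      obtain ⟨k, M, hM, rfl⟩ := hdecomp T hT
      obtain ⟨r, hr⟩ := int_poly hirr lam hroot hO M hM
      refine Subring.mul_mem _ (Subring.pow_mem _ hinvS k) ?_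
      rw [hr, aeval_eq_sum_range]
      exact Subring.sum_mem _ fun i _ => Subring.zsmul_mem _ (Subring.pow_mem _ hAS i) _
    · intro T hT
      refine (hmem T).2 ?_
      induction hT using Subring.closure_induction with
      | mem x hx =>
        rcases hx with rfl | rfl
        · exact Aq_mem A
        · exact Aq_inv_mem hA
      | zero => intro v _; rw [zero_mulVec]; exact (GAgrp A).zero_mem
      | one => intro v hv; rwa [one_mulVec]
      | add x y _ _ hx hy =>
        intro v hv; rw [add_mulVec]; exact (GAgrp A).add_mem (hx v hv) (hy v hv)
      | neg x _ hx => intro v hv; rw [neg_mulVec]; exact (GAgrp A).neg_mem (hx v hv)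
      | mul x y _ _ hx hy =>
        intro v hv; rw [← mulVec_mulVec]; exact hx _ (hy v hv)
end
end
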